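/- arXiv:math/0512636 — 7 statements merged into one kernel-verified Lean document; each statement's English description precedes it below -/
import Mathlib

section
/- There is an absolute constant c > 0 such that for every n ≥ 2 and every Boolean function f : {0,1}^n → {0,1} with expectation μ = E f, the sum of the squared influences satisfies Σ_{i=1}^n I_i(f)² ≥ c · μ²(1−μ)² · (log n)² / n. -/
open Finset

/-- Expectation with respect to the uniform measure on the discrete cube `{0,1}^n`. -/
noncomputable def cubeE {n : ℕ} (f : (Fin n → Bool) → ℝ) : ℝ :=
  (∑ x : Fin n → Bool, f x) / 2 ^ n

/-- `x ⊕ e_i` : flip the `i`-th coordinate of `x`. -/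
def flipAt {n : ℕ} (x : Fin n → Bool) (i : Fin n) : Fin n → Bool :=
  Function.update x i (!x i)

/-- Influence of the `i`-th variable of a Boolean function,
`I_i(f) = Pr_x[f(x) ≠ f(x ⊕ e_i)]` under the uniform measure. -/
noncomputable def infl {n : ℕ} (f : (Fin n → Bool) → Bool) (i : Fin n) : ℝ :=
  cubeE (fun x => if f x ≠ f (flipAt x i) then 1 else 0)

/-- Expectation of a Boolean function under the uniform measure. -/
noncomputable def meanB {n : ℕ} (f : (Fin n → Bool) → Bool) : ℝ :=
  cubeE (fun x => if f x then 1 else 0)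

/-- Conditional expectation given the first `j` coordinates: `condE f j x` is the
average of `f` over all `y` agreeing with `x` in the first `j` coordinates. -/
noncomputable def condE {n : ℕ} (f : (Fin n → Bool) → ℝ) (j : ℕ) (x : Fin n → Bool) : ℝ :=
  (∑ y : Fin n → Bool, if ∀ k : Fin n, (k : ℕ) < j → y k = x k then f y else 0) / 2 ^ (n - j)

/-- The Dirichlet form `E(f,f) = E_x Σ_i (f(x) - f(x ⊕ e_i))²`. -/
noncomputable def energy {n : ℕ} (f : (Fin n → Bool) → ℝ) : ℝ :=
  cubeE (fun x => ∑ i : Fin n, (f x - f (flipAt x i)) ^ 2)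

/-- Entropy of a nonnegative function: `Ent(g) = E[g log g] - E g · log E g`
(the convention `0 log 0 = 0` holds since `Real.log 0 = 0`). -/
noncomputable def ent {n : ℕ} (g : (Fin n → Bool) → ℝ) : ℝ :=
  cubeE (fun x => g x * Real.log (g x)) - cubeE g * Real.log (cubeE g)

namespace KKLaux

lemma cubeE_succ {n : ℕ} (f : (Fin (n+1) → Bool) → ℝ) :
    cubeE f = (cubeE (fun x : Fin n → Bool => f (Fin.cons false x : Fin (n+1) → Bool))
      + cubeE (fun x : Fin n → Bool => f (Fin.cons true x : Fin (n+1) → Bool))) / 2 := by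
  have h : ∑ x : Fin (n+1) → Bool, f x
      = ∑ p : Bool × (Fin n → Bool), f (Fin.cons p.1 p.2 : Fin (n+1) → Bool) :=
    (Equiv.sum_comp (Fin.consEquiv (fun _ : Fin (n+1) => Bool)) f).symm
  unfold cubeE
  rw [h, Fintype.sum_prod_type, Fintype.sum_bool, pow_succ]
  field_simp
  ring

lemma cubeE_add {n : ℕ} (f g : (Fin n → Bool) → ℝ) :
    cubeE (fun x => f x + g x) = cubeE f + cubeE g := by
  unfold cubeE; rw [Finset.sum_add_distrib, add_div]

lemma cubeE_mul {n : ℕ} (c : ℝ) (f : (Fin n → Bool) → ℝ) :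
    cubeE (fun x => c * f x) = c * cubeE f := by
  unfold cubeE; rw [← Finset.mul_sum, mul_div_assoc]

lemma cubeE_mono {n : ℕ} (f g : (Fin n → Bool) → ℝ) (h : ∀ x, f x ≤ g x) :
    cubeE f ≤ cubeE g := by
  unfold cubeE
  exact div_le_div_of_nonneg_right (Finset.sum_le_sum fun x _ => h x) (by positivity)

lemma cubeE_nonneg {n : ℕ} (f : (Fin n → Bool) → ℝ) (h : ∀ x, 0 ≤ f x) : 0 ≤ cubeE f := by
  unfold cubeE
  exact div_nonneg (Finset.sum_nonneg fun x _ => h x) (by positivity)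

lemma cubeE_zero_dim (f : (Fin 0 → Bool) → ℝ) : cubeE f = f default := by
  unfold cubeE
  rw [Fintype.sum_unique, pow_zero, div_one]
  exact congrArg f (Subsingleton.elim _ _)

lemma flip_zero {n : ℕ} (b : Bool) (x : Fin n → Bool) :
    flipAt (Fin.cons b x : Fin (n+1) → Bool) 0 = Fin.cons (!b) x := by
  simp [flipAt, Fin.update_cons_zero]

lemma flip_succ {n : ℕ} (b : Bool) (x : Fin n → Bool) (i : Fin n) :
    flipAt (Fin.cons b x : Fin (n+1) → Bool) i.succ = Fin.cons b (flipAt x i) := by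
  simp [flipAt, Fin.cons_update]

/-- restriction of the first coordinate -/
def res {n : ℕ} (f : (Fin (n+1) → Bool) → ℝ) (b : Bool) : (Fin n → Bool) → ℝ :=
  fun x => f (Fin.cons b x : Fin (n+1) → Bool)

lemma energy_succ {n : ℕ} (f : (Fin (n+1) → Bool) → ℝ) :
    energy f = (energy (res f false) + energy (res f true)) / 2
      + cubeE (fun x => (res f false x - res f true x) ^ 2) := by
  unfold energy
  rw [cubeE_succ]
  simp only [Fin.sum_univ_succ, flip_zero, flip_succ, Bool.not_false, Bool.not_true]
  rw [cubeE_add, cubeE_add]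
  have : (fun x : Fin n → Bool => (f (Fin.cons true x : Fin (n+1) → Bool)
      - f (Fin.cons false x : Fin (n+1) → Bool)) ^ 2)
      = fun x => (f (Fin.cons false x : Fin (n+1) → Bool)
      - f (Fin.cons true x : Fin (n+1) → Bool)) ^ 2 := by
    funext x; ring
  rw [this]
  unfold res
  ring

lemma cs {n : ℕ} (p q : (Fin n → Bool) → ℝ) :
    (√(cubeE fun x => p x ^ 2) - √(cubeE fun x => q x ^ 2)) ^ 2
      ≤ cubeE (fun x => (p x - q x) ^ 2) := by
  have h1 : cubeE (fun x => (p x - q x) ^ 2)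
      = cubeE (fun x => p x ^ 2) + cubeE (fun x => q x ^ 2) + (-2) * cubeE (fun x => p x * q x) := by
    rw [← cubeE_mul, ← cubeE_add, ← cubeE_add]
    congr 1; funext x; ring
  have h2 : cubeE (fun x => p x * q x)
      ≤ √(cubeE fun x => p x ^ 2) * √(cubeE fun x => q x ^ 2) := by
    unfold cubeE
    have := Real.sum_mul_le_sqrt_mul_sqrt Finset.univ p q
    rw [Real.sqrt_div (Finset.sum_nonneg fun x _ => sq_nonneg _),
      Real.sqrt_div (Finset.sum_nonneg fun x _ => sq_nonneg _), div_mul_div_comm,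
      Real.mul_self_sqrt (by positivity)]
    exact div_le_div_of_nonneg_right this (by positivity)
  have hp := Real.sq_sqrt (cubeE_nonneg (fun x => p x ^ 2) fun x => sq_nonneg _)
  have hq := Real.sq_sqrt (cubeE_nonneg (fun x => q x ^ 2) fun x => sq_nonneg _)
  rw [h1, sub_sq, hp, hq]
  linarith

/-- `a log (a / b²)` -/
noncomputable def Phi (a b : ℝ) : ℝ := a * Real.log a - 2 * a * Real.log b

/-- log-sum step -/
lemma logsum_aux {a b x y : ℝ} (ha : 0 < a) (hb : 0 < b) (hx : 0 ≤ x) (hy : 0 ≤ y)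
    (hxy : y = 0 → x = 0) :
    x * Real.log a - x * Real.log b + x - y * a / b ≤ x * Real.log x - x * Real.log y := by
  rcases hx.eq_or_lt with rfl | hx
  · have : 0 ≤ y * a / b := by positivity
    simp; linarith
  · have hy' : 0 < y := lt_of_le_of_ne hy fun h => hx.ne' (hxy h.symm)
    have h := Real.log_le_sub_one_of_pos (show 0 < y * a / (b * x) by positivity)
    rw [Real.log_div (by positivity) (by positivity), Real.log_mul hy'.ne' ha.ne',
      Real.log_mul hb.ne' hx.ne'] at h
    have h2 := mul_le_mul_of_nonneg_left h hx.le
    have h3 : x * (y * a / (b * x) - 1) = y * a / b - x := by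
      field_simp
    rw [h3] at h2
    linarith

lemma ent_aux {a x : ℝ} (ha : 0 < a) (hx : 0 ≤ x) :
    x * Real.log x ≤ x * Real.log a + x ^ 2 / a - x := by
  rcases hx.eq_or_lt with rfl | hx
  · simp
  · have h := Real.log_le_sub_one_of_pos (show 0 < x / a by positivity)
    rw [Real.log_div hx.ne' ha.ne'] at h
    have h2 := mul_le_mul_of_nonneg_left h hx.le
    have h3 : x * (x / a - 1) = x ^ 2 / a - x := by ring
    rw [h3] at h2
    linarith

lemma two_point {x y u v : ℝ} (hx : 0 ≤ x) (hy : 0 ≤ y) (hu : 0 ≤ u) (hv : 0 ≤ v)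
    (hux : u = 0 → x = 0) (hvy : v = 0 → y = 0) :
    Phi ((x + y) / 2) ((u + v) / 2) ≤ (Phi x u + Phi y v) / 2 + (√x - √y) ^ 2 := by
  rcases (add_nonneg hx hy).eq_or_lt with h | h
  · have hx0 : x = 0 := by linarith
    have hy0 : y = 0 := by linarith
    subst hx0 hy0
    simp [Phi]
  have huv : 0 < u + v := by
    rcases (add_nonneg hu hv).eq_or_lt with h' | h'
    · have := hux (by linarith)
      have := hvy (by linarith)
      linarith
    · exact h'
  obtain ⟨a, ha⟩ : ∃ a, a = (x + y) / 2 := ⟨_, rfl⟩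
  obtain ⟨b, hb⟩ : ∃ b, b = (u + v) / 2 := ⟨_, rfl⟩
  have ha0 : 0 < a := by linarith
  have hb0 : 0 < b := by linarith
  have l1 := logsum_aux ha0 hb0 hx hu hux
  have l2 := logsum_aux ha0 hb0 hy hv hvy
  have e1 := ent_aux ha0 hx
  have e2 := ent_aux ha0 hy
  have k1 : u * a / b + v * a / b = 2 * a := by
    have : u + v = 2 * b := by linarith
    rw [← add_div, ← add_mul, this]; field_simp
  have k2 : x ^ 2 / a + y ^ 2 / a - 2 * a ≤ 2 * (√x - √y) ^ 2 := by
    rw [← add_div, sub_le_iff_le_add, div_le_iff₀ ha0, ha]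
    have p := Real.sq_sqrt hx
    have q := Real.sq_sqrt hy
    set P := √x
    set Q := √y
    rw [← p, ← q]
    nlinarith [sq_nonneg ((P - Q) ^ 2), sq_nonneg (P - Q)]
  rw [← ha, ← hb]
  unfold Phi
  have hxy : y = 2 * a - x := by linarith
  have m1 : x * Real.log a + y * Real.log a = 2 * (a * Real.log a) := by rw [hxy]; ring
  have m2 : x * Real.log b + y * Real.log b = 2 * (a * Real.log b) := by rw [hxy]; ring
  linarith

lemma abs_zero_sq {n : ℕ} (f : (Fin n → Bool) → ℝ) (h : cubeE (fun x => |f x|) = 0) :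
    cubeE (fun x => f x ^ 2) = 0 := by
  unfold cubeE at *
  rw [div_eq_zero_iff] at h
  rcases h with h | h
  · rw [Finset.sum_eq_zero_iff_of_nonneg (fun x _ => abs_nonneg _)] at h
    rw [Finset.sum_eq_zero, zero_div]
    intro x hx
    have := abs_eq_zero.mp (h x hx)
    simp [this]
  · exact absurd h (by positivity)

/-- Consequence of the logarithmic Sobolev inequality. -/
lemma energy_ge_Phi : ∀ {n : ℕ} (h : (Fin n → Bool) → ℝ),
    Phi (cubeE fun x => h x ^ 2) (cubeE fun x => |h x|) ≤ energy h
  | 0, h => by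
    have : energy h = 0 := by simp [energy, cubeE]
    rw [this, cubeE_zero_dim, cubeE_zero_dim]
    unfold Phi
    rw [Real.log_abs, Real.log_pow]
    push_cast
    linarith
  | n+1, h => by
    have i0 := energy_ge_Phi (res h false)
    have i1 := energy_ge_Phi (res h true)
    rw [energy_succ, cubeE_succ, cubeE_succ]
    have c := cs (res h false) (res h true)
    have t := two_point (cubeE_nonneg (fun x => res h false x ^ 2) fun x => sq_nonneg _)
      (cubeE_nonneg (fun x => res h true x ^ 2) fun x => sq_nonneg _)
      (cubeE_nonneg (fun x => |res h false x|) fun x => abs_nonneg _)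
      (cubeE_nonneg (fun x => |res h true x|) fun x => abs_nonneg _)
      (abs_zero_sq _) (abs_zero_sq _)
    unfold res at *
    linarith

lemma Phi_lin {a b : ℝ} (s : ℝ) (ha : 0 ≤ a) (hb : 0 ≤ b) (hab : b = 0 → a = 0) :
    s * a - Real.exp (s - 1) * b ^ 2 ≤ Phi a b := by
  rcases ha.eq_or_lt with rfl | ha
  · have : 0 ≤ Real.exp (s - 1) * b ^ 2 := by positivity
    simp [Phi]; linarith
  · have hb' : 0 < b := lt_of_le_of_ne hb fun h => ha.ne' (hab h.symm)
    have h := Real.log_le_sub_one_of_pos (show 0 < Real.exp (s - 1) * b ^ 2 / a by positivity)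
    rw [Real.log_div (by positivity) ha.ne', Real.log_mul (by positivity) (by positivity),
      Real.log_exp, Real.log_pow] at h
    push_cast at h
    have h2 := mul_le_mul_of_nonneg_left h ha.le
    have h3 : a * (Real.exp (s - 1) * b ^ 2 / a - 1) = Real.exp (s - 1) * b ^ 2 - a := by
      field_simp
    rw [h3] at h2
    unfold Phi
    linarith

/-- `L¹` influence. -/
noncomputable def D {n : ℕ} (f : (Fin n → Bool) → ℝ) (i : Fin n) : ℝ :=
  cubeE (fun x => |f x - f (flipAt x i)|)

lemma D_nonneg {n : ℕ} (f : (Fin n → Bool) → ℝ) (i : Fin n) : 0 ≤ D f i :=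
  cubeE_nonneg _ fun _ => abs_nonneg _

lemma D_zero {n : ℕ} (f : (Fin (n+1) → Bool) → ℝ) :
    D f 0 = 2 * cubeE (fun x => |(res f false x - res f true x) / 2|) := by
  unfold D
  rw [cubeE_succ]
  simp only [flip_zero, Bool.not_false, Bool.not_true]
  rw [← cubeE_add, ← cubeE_mul, div_eq_inv_mul, ← cubeE_mul]
  congr 1; funext x
  unfold res
  rw [abs_sub_comm (f (Fin.cons true x : Fin (n+1) → Bool)), abs_div, abs_two]
  ring

lemma D_succ {n : ℕ} (f : (Fin (n+1) → Bool) → ℝ) (i : Fin n) :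
    D (fun x => (res f false x + res f true x) / 2) i ≤ D f i.succ := by
  unfold D
  rw [cubeE_succ]
  simp only [flip_succ]
  rw [← cubeE_add, div_eq_inv_mul, ← cubeE_mul]
  apply cubeE_mono
  intro x
  unfold res
  have h := abs_add_le (f (Fin.cons false x : Fin (n+1) → Bool) - f (Fin.cons false (flipAt x i)))
    (f (Fin.cons true x : Fin (n+1) → Bool) - f (Fin.cons true (flipAt x i)))
  rw [show ∀ a b c d : ℝ, (a + b) / 2 - (c + d) / 2 = 2⁻¹ * ((a - c) + (b - d)) by
    intros; ring, abs_mul, abs_of_pos (by norm_num : (0:ℝ) < 2⁻¹)]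
  linarith

lemma energy_split {n : ℕ} (p q : (Fin n → Bool) → ℝ) :
    (energy p + energy q) / 2 = energy (fun x => (p x + q x) / 2)
      + energy (fun x => (p x - q x) / 2) := by
  unfold energy
  rw [← cubeE_add, ← cubeE_add, div_eq_inv_mul, ← cubeE_mul]
  congr 1; funext x
  rw [← Finset.sum_add_distrib, ← Finset.sum_add_distrib, Finset.mul_sum]
  apply Finset.sum_congr rfl
  intros; ring

lemma main_ineq (s : ℝ) : ∀ {n : ℕ} (f : (Fin n → Bool) → ℝ),
    s * (cubeE (fun x => f x ^ 2) - (cubeE f) ^ 2)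
      - Real.exp (s - 1) * ((∑ i, D f i ^ 2) / 4) ≤ energy f
  | 0, f => by
    have : energy f = 0 := by simp [energy, cubeE]
    rw [this, cubeE_zero_dim, cubeE_zero_dim]
    simp
  | n+1, f => by
    obtain ⟨g, hg⟩ : ∃ g : (Fin n → Bool) → ℝ, g = fun x => (res f false x + res f true x) / 2 :=
      ⟨_, rfl⟩
    obtain ⟨h, hh⟩ : ∃ h : (Fin n → Bool) → ℝ, h = fun x => (res f false x - res f true x) / 2 :=
      ⟨_, rfl⟩
    have ih := main_ineq s g
    have e : energy f = energy g + energy h + 4 * cubeE (fun x => h x ^ 2) := by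
      rw [energy_succ, energy_split, hg, hh, ← cubeE_mul]
      congr 2; funext x; ring
    have hP := energy_ge_Phi h
    have hL := Phi_lin s (cubeE_nonneg (fun x => h x ^ 2) fun x => sq_nonneg _)
      (cubeE_nonneg (fun x => |h x|) fun x => abs_nonneg _) (abs_zero_sq _)
    have hnn := cubeE_nonneg (fun x => h x ^ 2) fun x => sq_nonneg _
    have v2 : cubeE (fun x => f x ^ 2) = cubeE (fun x => g x ^ 2) + cubeE (fun x => h x ^ 2) := by
      rw [cubeE_succ, ← cubeE_add, ← cubeE_add, div_eq_inv_mul, ← cubeE_mul, hg, hh]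
      congr 1; funext x; unfold res; ring
    have v1 : cubeE f = cubeE g := by
      rw [cubeE_succ, ← cubeE_add, div_eq_inv_mul, ← cubeE_mul, hg]
      congr 1; funext x; unfold res; ring
    have d0 : D f 0 = 2 * cubeE (fun x => |h x|) := by rw [D_zero, hh]
    have ds : ∑ i, D g i ^ 2 ≤ ∑ i : Fin n, D f i.succ ^ 2 := by
      apply Finset.sum_le_sum
      intro i _
      apply pow_le_pow_left₀ (D_nonneg _ _)
      rw [hg]; exact D_succ f i
    have ds' := mul_le_mul_of_nonneg_left ds (Real.exp_pos (s - 1)).le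
    rw [e, v2, v1, Fin.sum_univ_succ, d0]
    linarith

end KKLaux

open KKLaux in
/-- **KKL theorem** (sum-of-squares form): there is an absolute constant `c > 0` such that
for every `n ≥ 2` and every Boolean function `f` on `{0,1}^n` with expectation `μ`,
`Σ_i I_i(f)² ≥ c · μ²(1-μ)² (log n)² / n`. -/
theorem kkl_sum_of_squared_influences :
    ∃ c : ℝ, 0 < c ∧ ∀ n : ℕ, 2 ≤ n → ∀ f : (Fin n → Bool) → Bool,
      ∑ i : Fin n, (infl f i) ^ 2 ≥
        c * (meanB f) ^ 2 * (1 - meanB f) ^ 2 * (Real.log n) ^ 2 / n := by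
  refine ⟨1 / 16, by norm_num, ?_⟩
  intro n hn f
  obtain ⟨F, hF⟩ : ∃ F : (Fin n → Bool) → ℝ, F = fun x => if f x then 1 else 0 := ⟨_, rfl⟩
  have hD : ∀ i, D F i = infl f i := by
    intro i
    unfold D infl
    congr 1; funext x
    rw [hF]
    cases h1 : f x <;> cases h2 : f (flipAt x i) <;> simp [h1, h2]
  have hE : energy F = ∑ i, infl f i := by
    unfold energy infl cubeE
    rw [Finset.sum_comm, Finset.sum_div]
    apply Finset.sum_congr rfl
    intro i _
    congr 1
    apply Finset.sum_congr rfl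
    intro x _
    rw [hF]
    cases h1 : f x <;> cases h2 : f (flipAt x i) <;> simp [h1, h2]
  have hm : cubeE F = meanB f := by rw [hF]; rfl
  have hm2 : cubeE (fun x => F x ^ 2) = meanB f := by
    rw [← hm]; congr 1; funext x; rw [hF]; cases h1 : f x <;> simp [h1]
  have hn0 : (0:ℝ) < n := by exact_mod_cast (by omega : 0 < n)
  have hn1 : (1:ℝ) ≤ n := by exact_mod_cast (by omega : 1 ≤ n)
  have key := main_ineq (Real.log n / 2) F
  simp only [hD] at key
  rw [hE, hm2, hm] at key
  have hcs : (∑ i, infl f i) ^ 2 ≤ n * ∑ i, infl f i ^ 2 := by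
    have := sq_sum_le_card_mul_sum_sq (s := (Finset.univ : Finset (Fin n))) (f := infl f)
    simpa using this
  have hI : 0 ≤ ∑ i, infl f i := Finset.sum_nonneg fun i _ => by rw [← hD]; exact D_nonneg _ _
  have hS : 0 ≤ ∑ i, infl f i ^ 2 := Finset.sum_nonneg fun i _ => sq_nonneg _
  have hexp : Real.exp (Real.log n / 2 - 1) ≤ √n := by
    rw [Real.sqrt_eq_rpow, Real.rpow_def_of_pos hn0]
    apply Real.exp_le_exp.mpr; linarith
  have hlog : Real.log n ≤ √n * 2 := by
    have h := Real.log_le_sub_one_of_pos (Real.sqrt_pos.mpr hn0)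
    rw [Real.log_sqrt hn0.le] at h
    linarith
  have hl0 : 0 ≤ Real.log n := Real.log_nonneg hn1
  have hV : meanB f - meanB f ^ 2 = meanB f * (1 - meanB f) := by ring
  have hV0 : 0 ≤ meanB f * (1 - meanB f) := by
    have a0 : 0 ≤ meanB f := by rw [← hm2]; exact cubeE_nonneg _ fun x => sq_nonneg _
    have a1 : meanB f ≤ 1 := by
      have : meanB f ≤ cubeE (n := n) (fun _ => 1) := by
        rw [← hm]; apply cubeE_mono; intro x; rw [hF]; dsimp only; split_ifs <;> norm_num
      simpa [cubeE] using this
    exact mul_nonneg a0 (by linarith)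
  rw [hV] at key
  have hV1 : meanB f * (1 - meanB f) ≤ 1 := by nlinarith [sq_nonneg (meanB f - 1/2)]
  rw [show 1 / 16 * meanB f ^ 2 * (1 - meanB f) ^ 2 * Real.log n ^ 2 / n
    = (meanB f * (1 - meanB f) * Real.log n / 4) ^ 2 / n by ring]
  set V := meanB f * (1 - meanB f)
  set I := ∑ i, infl f i
  set S := ∑ i, infl f i ^ 2
  set L := Real.log n
  have hr := Real.sq_sqrt hn0.le
  have hr0 := Real.sqrt_pos.mpr hn0
  set R := √(n:ℝ)
  rw [ge_iff_le, div_le_iff₀ hn0]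
  rcases le_total (V * L / 4) I with h | h
  · have := pow_le_pow_left₀ (by positivity) h 2
    linarith
  · have h1 : Real.exp (L / 2 - 1) * (S / 4) ≤ R * (S / 4) :=
      mul_le_mul_of_nonneg_right hexp (by positivity)
    have h2 : V * L ≤ R * S := by linarith
    have h3 : V * L ≤ 2 * R := by nlinarith
    have h4 : (V * L) * (V * L) ≤ (R * S) * (2 * R) :=
      mul_le_mul h2 h3 (by positivity) (by positivity)
    nlinarith
end

section
/- There is an absolute constant c > 0 such that for every n ≥ 2 and every Boolean function f : {0,1}^n → {0,1} with expectation μ = E f, there exists an index i ∈ {1,…,n} with influence I_i(f) ≥ c · μ(1−μ) · (log n) / n. -/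
open Finset

namespace KKLAux

variable {n : ℕ}

theorem cubeE_add (f g : (Fin n → Bool) → ℝ) :
    cubeE (fun x => f x + g x) = cubeE f + cubeE g := by
  simp only [cubeE, Finset.sum_add_distrib, add_div]

theorem cubeE_smul (c : ℝ) (g : (Fin n → Bool) → ℝ) :
    cubeE (fun x => c * g x) = c * cubeE g := by
  simp only [cubeE, ← Finset.mul_sum, mul_div_assoc]

theorem cubeE_sum {ι : Type*} (s : Finset ι) (F : ι → (Fin n → Bool) → ℝ) :
    cubeE (fun x => ∑ i ∈ s, F i x) = ∑ i ∈ s, cubeE (F i) := by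
  simp only [cubeE]
  rw [Finset.sum_comm, Finset.sum_div]

theorem cubeE_nonneg (f : (Fin n → Bool) → ℝ) (h : ∀ x, 0 ≤ f x) : 0 ≤ cubeE f := by
  unfold cubeE
  exact div_nonneg (Finset.sum_nonneg fun x _ => h x) (by positivity)

theorem cubeE_cs (f g : (Fin n → Bool) → ℝ) :
    (cubeE (fun x => f x * g x)) ^ 2 ≤ cubeE (fun x => f x ^ 2) * cubeE (fun x => g x ^ 2) := by
  unfold cubeE
  rw [div_pow, div_mul_div_comm, ← sq]
  gcongr
  exact Finset.sum_mul_sq_le_sq_mul_sq _ _ _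

theorem flip_flip (x : Fin n → Bool) (i : Fin n) : flipAt (flipAt x i) i = x := by
  simp [flipAt]

theorem cubeE_flip (f : (Fin n → Bool) → ℝ) (i : Fin n) :
    cubeE (fun x => f (flipAt x i)) = cubeE f := by
  unfold cubeE
  congr 1
  exact Fintype.sum_equiv (Function.Involutive.toPerm (fun x => flipAt x i)
    (fun x => flip_flip x i)) _ _ (fun x => rfl)

def sg (b : Bool) : ℝ := if b then -1 else 1

theorem sg_sq (b : Bool) : sg b ^ 2 = 1 := by cases b <;> simp [sg]

def chi (S : Finset (Fin n)) (x : Fin n → Bool) : ℝ := ∏ i ∈ S, sg (x i)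

theorem chi_flip (S : Finset (Fin n)) (x : Fin n → Bool) (i : Fin n) :
    chi S (flipAt x i) = if i ∈ S then - chi S x else chi S x := by
  unfold chi
  have hne : ∀ T : Finset (Fin n), i ∉ T → ∏ j ∈ T, sg (flipAt x i j) = ∏ j ∈ T, sg (x j) := by
    intro T hT
    refine Finset.prod_congr rfl fun j hj => ?_
    have : j ≠ i := fun h => hT (h ▸ hj)
    simp [flipAt, this]
  split_ifs with h
  · rw [← Finset.mul_prod_erase S _ h, ← Finset.mul_prod_erase S (fun j => sg (x j)) h,
      hne _ (Finset.notMem_erase i S)]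
    have : sg (flipAt x i i) = - sg (x i) := by
      cases hx : x i <;> simp [flipAt, sg, hx]
    rw [this]; ring
  · exact hne S h

theorem cubeE_odd (f : (Fin n → Bool) → ℝ) (i : Fin n) (h : ∀ x, f (flipAt x i) = - f x) :
    cubeE f = 0 := by
  have h1 := cubeE_flip f i
  have h2 : cubeE (fun x => f (flipAt x i)) = - cubeE f := by
    have := cubeE_smul (-1) f
    simp only [h]
    simpa using this
  linarith

theorem sum_chi (x y : Fin n → Bool) :
    ∑ S : Finset (Fin n), chi S x * chi S y = if x = y then (2 : ℝ) ^ n else 0 := by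
  have h : ∑ S : Finset (Fin n), chi S x * chi S y = ∏ i : Fin n, (1 + sg (x i) * sg (y i)) := by
    rw [Finset.prod_one_add, Finset.powerset_univ]
    refine Finset.sum_congr rfl fun S _ => ?_
    simp [chi, Finset.prod_mul_distrib]
  rw [h]
  split_ifs with hxy
  · subst hxy
    have : ∀ i, 1 + sg (x i) * sg (x i) = 2 := fun i => by
      have := sg_sq (x i); rw [sq] at this; rw [this]; norm_num
    simp [this]
  · obtain ⟨i, hi⟩ := Function.ne_iff.mp hxy
    refine Finset.prod_eq_zero (Finset.mem_univ i) ?_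
    cases hx : x i <;> cases hy : y i <;> simp_all [sg]

noncomputable def hat (g : (Fin n → Bool) → ℝ) (S : Finset (Fin n)) : ℝ :=
  cubeE (fun x => g x * chi S x)

theorem parseval (g : (Fin n → Bool) → ℝ) :
    ∑ S : Finset (Fin n), hat g S ^ 2 = cubeE (fun x => g x ^ 2) := by
  have h1 : ∀ S : Finset (Fin n), hat g S ^ 2
      = (∑ x, ∑ y, g x * g y * (chi S x * chi S y)) / (2 ^ n * 2 ^ n) := by
    intro S
    unfold hat cubeE
    rw [div_pow, sq, Finset.sum_mul_sum, sq]
    congr 1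
    refine Finset.sum_congr rfl fun x _ => Finset.sum_congr rfl fun y _ => by ring
  simp only [h1]
  rw [← Finset.sum_div, Finset.sum_comm]
  have h2 : ∀ x : Fin n → Bool, ∑ S : Finset (Fin n), ∑ y, g x * g y * (chi S x * chi S y)
      = g x ^ 2 * 2 ^ n := by
    intro x
    rw [Finset.sum_comm]
    simp only [← Finset.mul_sum, sum_chi]
    simp [sq]
  simp only [h2]
  rw [← Finset.sum_mul]
  unfold cubeE
  have : (2 : ℝ) ^ n ≠ 0 := by positivity
  field_simp

/-- Bonami's inequality. -/
theorem bonami (A : Finset (Fin n)) : ∀ b : Finset (Fin n) → ℝ,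
    cubeE (fun x => (∑ S ∈ A.powerset, b S * chi S x) ^ 4)
      ≤ (∑ S ∈ A.powerset, 3 ^ S.card * b S ^ 2) ^ 2 := by
  induction A using Finset.induction_on with
  | empty =>
    intro b
    simp only [Finset.powerset_empty, Finset.sum_singleton, chi, cubeE]
    simp
    apply le_of_eq; ring
  | insert i A hi ih =>
    intro b
    set P : (Fin n → Bool) → ℝ := fun x => ∑ S ∈ A.powerset, b S * chi S x with hP
    set Q : (Fin n → Bool) → ℝ := fun x => ∑ S ∈ A.powerset, b (insert i S) * chi S x with hQ
    set p := ∑ S ∈ A.powerset, 3 ^ S.card * b S ^ 2 with hp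
    set q := ∑ S ∈ A.powerset, 3 ^ S.card * b (insert i S) ^ 2 with hq
    have hp0 : 0 ≤ p := Finset.sum_nonneg fun S _ => by positivity
    have hq0 : 0 ≤ q := Finset.sum_nonneg fun S _ => by positivity
    have hPp : cubeE (fun x => P x ^ 4) ≤ p ^ 2 := ih b
    have hQq : cubeE (fun x => Q x ^ 4) ≤ q ^ 2 := ih (fun S => b (insert i S))
    have hnot : ∀ S ∈ A.powerset, i ∉ S := fun S hS h => hi (Finset.mem_powerset.mp hS h)
    have hPf : ∀ x, P (flipAt x i) = P x := fun x => by
      refine Finset.sum_congr rfl fun S hS => ?_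
      rw [chi_flip, if_neg (hnot S hS)]
    have hQf : ∀ x, Q (flipAt x i) = Q x := fun x => by
      refine Finset.sum_congr rfl fun S hS => ?_
      rw [chi_flip, if_neg (hnot S hS)]
    have hsf : ∀ x : Fin n → Bool, sg (flipAt x i i) = - sg (x i) := fun x => by
      cases hx : x i <;> simp [flipAt, sg, hx]
    have e1 : ∀ x, ∑ S ∈ (insert i A).powerset, b S * chi S x = P x + sg (x i) * Q x := by
      intro x
      rw [Finset.sum_powerset_insert hi, hP, hQ]
      simp only [Finset.mul_sum]
      congr 1
      refine Finset.sum_congr rfl fun S hS => ?_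
      have : chi (insert i S) x = sg (x i) * chi S x := by
        unfold chi; rw [Finset.prod_insert (hnot S hS)]
      rw [this]; ring
    have e2 : ∑ S ∈ (insert i A).powerset, 3 ^ S.card * b S ^ 2 = p + 3 * q := by
      rw [Finset.sum_powerset_insert hi, hp, hq, Finset.mul_sum]
      congr 1
      refine Finset.sum_congr rfl fun S hS => ?_
      rw [Finset.card_insert_of_notMem (hnot S hS), pow_succ]; ring
    have e3 : cubeE (fun x => (P x + sg (x i) * Q x) ^ 4)
        = cubeE (fun x => P x ^ 4) + 6 * cubeE (fun x => P x ^ 2 * Q x ^ 2)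
          + cubeE (fun x => Q x ^ 4) := by
      have h0 : cubeE (fun x => sg (x i) * (4 * P x ^ 3 * Q x + 4 * P x * Q x ^ 3)) = 0 := by
        apply cubeE_odd _ i
        intro x
        rw [hsf, hPf, hQf]; ring
      rw [← cubeE_smul, ← cubeE_add, ← cubeE_add]
      conv_rhs => rw [← add_zero (cubeE _), ← h0, ← cubeE_add]
      congr 1
      funext x
      have h2 := sg_sq (x i)
      have h3 : sg (x i) ^ 3 = sg (x i) := by rw [pow_succ, h2, one_mul]
      have h4 : sg (x i) ^ 4 = 1 := by
        rw [show (4 : ℕ) = 2 * 2 from rfl, pow_mul, h2, one_pow]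
      linear_combination (6 * P x ^ 2 * Q x ^ 2) * h2 + (4 * P x * Q x ^ 3) * h3 + Q x ^ 4 * h4
    simp only [e1]
    rw [e2, e3]
    have hcs := cubeE_cs (fun x => P x ^ 2) (fun x => Q x ^ 2)
    simp only [← pow_mul] at hcs
    norm_num at hcs
    have hQ0 : 0 ≤ cubeE (fun x => Q x ^ 4) := cubeE_nonneg _ fun x => by positivity
    have hPQ : cubeE (fun x => P x ^ 2 * Q x ^ 2) ≤ p * q := by
      refine (abs_le_of_sq_le_sq' ?_ (by positivity)).2
      calc _ ≤ _ := hcs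
        _ ≤ p ^ 2 * q ^ 2 := mul_le_mul hPp hQq hQ0 (by positivity)
        _ = _ := by ring
    nlinarith [sq_nonneg q]

/-- Consequence for functions with values in `{-1,0,1}`. -/
theorem level (g : (Fin n → Bool) → ℝ) (hg : ∀ x, g x ^ 3 = g x) :
    (∑ S : Finset (Fin n), (1 / 3) ^ S.card * hat g S ^ 2) ^ 2 ≤ cubeE (fun x => g x ^ 2) ^ 3 := by
  set A := ∑ S : Finset (Fin n), (1 / 3 : ℝ) ^ S.card * hat g S ^ 2 with hA
  set P := cubeE (fun x => g x ^ 2) with hP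
  set h : (Fin n → Bool) → ℝ := fun x => ∑ S : Finset (Fin n), ((1/3) ^ S.card * hat g S) * chi S x
    with hh
  have hA0 : 0 ≤ A := Finset.sum_nonneg fun S _ => by positivity
  have hP0 : 0 ≤ P := cubeE_nonneg _ fun x => by positivity
  have h4 : cubeE (fun x => h x ^ 4) ≤ A ^ 2 := by
    have := bonami (Finset.univ : Finset (Fin n)) (fun S => (1/3) ^ S.card * hat g S)
    rw [Finset.powerset_univ] at this
    refine this.trans (le_of_eq ?_)
    rw [hA]
    congr 1
    refine Finset.sum_congr rfl fun S _ => ?_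
    have : (3 : ℝ) ^ S.card * (1 / 3) ^ S.card = 1 := by rw [← mul_pow]; norm_num
    linear_combination ((1/3) ^ S.card * hat g S ^ 2) * this
  have hgh : cubeE (fun x => g x * h x) = A := by
    simp only [hh, Finset.mul_sum]
    rw [cubeE_sum, hA]
    refine Finset.sum_congr rfl fun S _ => ?_
    have : (fun x => g x * ((1/3) ^ S.card * hat g S * chi S x))
        = fun x => ((1/3) ^ S.card * hat g S) * (g x * chi S x) := by funext x; ring
    rw [this, cubeE_smul]
    change _ * hat g S = _
    ring
  have c1 := cubeE_cs g (fun x => g x ^ 2 * h x)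
  have c2 := cubeE_cs (fun x => g x ^ 2) (fun x => h x ^ 2)
  have r1 : (fun x => g x * (g x ^ 2 * h x)) = fun x => g x * h x := by
    funext x; linear_combination h x * hg x
  have r2 : (fun x => (g x ^ 2 * h x) ^ 2) = fun x => g x ^ 2 * h x ^ 2 := by
    funext x; linear_combination g x * h x ^ 2 * hg x
  have r3 : (fun x => (g x ^ 2) ^ 2) = fun x => g x ^ 2 := by
    funext x; linear_combination g x * hg x
  have r4 : (fun x => (h x ^ 2) ^ 2) = fun x => h x ^ 4 := by
    funext x; ring
  rw [r1, r2, hgh, ← hP] at c1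
  rw [r3, r4, ← hP] at c2
  set R := cubeE (fun x => g x ^ 2 * h x ^ 2) with hR
  have hR0 : 0 ≤ R := cubeE_nonneg _ fun x => by positivity
  have c3 : R ^ 2 ≤ P * A ^ 2 := c2.trans (mul_le_mul_of_nonneg_left h4 hP0)
  have c4 : (A ^ 2) ^ 2 ≤ P ^ 3 * A ^ 2 := by
    calc (A ^ 2) ^ 2 ≤ (P * R) ^ 2 := pow_le_pow_left₀ (by positivity) c1 2
      _ = P ^ 2 * R ^ 2 := by ring
      _ ≤ P ^ 2 * (P * A ^ 2) := mul_le_mul_of_nonneg_left c3 (by positivity)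
      _ = _ := by ring
  rcases eq_or_lt_of_le hA0 with h0 | h0
  · rw [← h0]; simp; positivity
  · have : 0 < A ^ 2 := by positivity
    rw [sq (A ^ 2)] at c4
    exact le_of_mul_le_mul_right c4 this

noncomputable def toR (f : (Fin n → Bool) → Bool) (x : Fin n → Bool) : ℝ := if f x then 1 else 0

noncomputable def dif (f : (Fin n → Bool) → Bool) (i : Fin n) (x : Fin n → Bool) : ℝ :=
  toR f x - toR f (flipAt x i)

theorem dif_cube (f : (Fin n → Bool) → Bool) (i : Fin n) (x) : dif f i x ^ 3 = dif f i x := by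
  unfold dif toR; split_ifs <;> norm_num

theorem dif_sq (f : (Fin n → Bool) → Bool) (i : Fin n) :
    cubeE (fun x => dif f i x ^ 2) = infl f i := by
  unfold infl
  congr 1
  funext x
  unfold dif toR
  cases f x <;> cases f (flipAt x i) <;> simp

theorem hat_dif (f : (Fin n → Bool) → Bool) (i : Fin n) (S : Finset (Fin n)) :
    hat (dif f i) S ^ 2 = if i ∈ S then 4 * hat (toR f) S ^ 2 else 0 := by
  have h1 : hat (dif f i) S = hat (toR f) S
      + (-1) * cubeE (fun x => toR f (flipAt x i) * chi S x) := by
    unfold hat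
    rw [← cubeE_smul, ← cubeE_add]
    congr 1; funext x; unfold dif; ring
  have h2 : cubeE (fun x => toR f (flipAt x i) * chi S x)
      = if i ∈ S then - hat (toR f) S else hat (toR f) S := by
    rw [← cubeE_flip _ i]
    simp only [flip_flip, chi_flip]
    split_ifs
    · unfold hat
      have := cubeE_smul (-1) (fun x => toR f x * chi S x)
      rw [neg_one_mul] at this
      rw [← this]; congr 1; funext x; ring
    · rfl
  rw [h1, h2]
  split_ifs <;> ring

theorem sum_card (w : Finset (Fin n) → ℝ) :
    ∑ i : Fin n, ∑ S : Finset (Fin n), (if i ∈ S then w S else 0)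
      = ∑ S : Finset (Fin n), (S.card : ℝ) * w S := by
  rw [Finset.sum_comm]
  refine Finset.sum_congr rfl fun S _ => ?_
  simp

theorem sum_infl (f : (Fin n → Bool) → Bool) :
    ∑ i, infl f i = ∑ S : Finset (Fin n), (S.card : ℝ) * (4 * hat (toR f) S ^ 2) := by
  rw [← sum_card]
  refine Finset.sum_congr rfl fun i _ => ?_
  rw [← dif_sq, ← parseval]
  exact Finset.sum_congr rfl fun S _ => hat_dif f i S

noncomputable def lev (f : (Fin n → Bool) → Bool) (i : Fin n) : ℝ :=
  ∑ S : Finset (Fin n), (1 / 3) ^ S.card * hat (dif f i) S ^ 2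

theorem lev_sq (f : (Fin n → Bool) → Bool) (i : Fin n) : lev f i ^ 2 ≤ infl f i ^ 3 := by
  rw [← dif_sq]
  exact level _ (dif_cube f i)

theorem sum_lev (f : (Fin n → Bool) → Bool) :
    ∑ i, lev f i
      = ∑ S : Finset (Fin n), (S.card : ℝ) * ((1/3) ^ S.card * (4 * hat (toR f) S ^ 2)) := by
  rw [← sum_card]
  refine Finset.sum_congr rfl fun i _ => ?_
  unfold lev
  refine Finset.sum_congr rfl fun S _ => ?_
  rw [hat_dif]; split_ifs <;> simp

theorem var_eq (f : (Fin n → Bool) → Bool) :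
    meanB f * (1 - meanB f)
      = ∑ S : Finset (Fin n), (if S.card = 0 then 0 else hat (toR f) S ^ 2) := by
  have h1 : ∑ S : Finset (Fin n), hat (toR f) S ^ 2 = meanB f := by
    rw [parseval]; unfold meanB; congr 1; funext x; unfold toR; split_ifs <;> simp
  have h2 : hat (toR f) ∅ = meanB f := by
    unfold hat meanB; congr 1; funext x; simp [chi, toR]
  have h3 : ∑ S : Finset (Fin n), (if S.card = 0 then hat (toR f) S ^ 2 else 0) = meanB f ^ 2 := by
    simp [Finset.card_eq_zero, h2]
  have h4 : ∑ S : Finset (Fin n), (if S.card = 0 then 0 else hat (toR f) S ^ 2)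
     + ∑ S : Finset (Fin n), (if S.card = 0 then hat (toR f) S ^ 2 else 0) = meanB f := by
    rw [← Finset.sum_add_distrib, ← h1]
    refine Finset.sum_congr rfl fun S _ => ?_
    split_ifs <;> simp
  linear_combination h3 - h4

theorem scalar (k : ℝ) (hk : 0 < k) (s : ℕ) (hs : s ≠ 0) :
    1 ≤ (s : ℝ) / k + Real.exp (2 * k) * (s * (1/3) ^ s) := by
  have hs1 : (1 : ℝ) ≤ s := by exact_mod_cast Nat.one_le_iff_ne_zero.mpr hs
  rcases le_or_gt k s with h | h
  · have : 1 ≤ (s : ℝ) / k := by rwa [le_div_iff₀ hk, one_mul]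
    have : 0 ≤ Real.exp (2 * k) * (s * (1/3) ^ s) := by positivity
    linarith
  · have h3 : (3 : ℝ) ≤ Real.exp 2 := by
      have := Real.add_one_le_exp (2 : ℝ); linarith
    have : (3 : ℝ) ^ s ≤ Real.exp (2 * k) := by
      calc (3 : ℝ) ^ s ≤ Real.exp 2 ^ s := pow_le_pow_left₀ (by norm_num) h3 s
        _ = Real.exp (s * 2) := by rw [Real.exp_nat_mul]
        _ ≤ _ := Real.exp_le_exp.mpr (by linarith)
    have h5 : 1 ≤ Real.exp (2 * k) * (s * (1/3) ^ s) := by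
      calc (1 : ℝ) = 3 ^ s * (1 * (1/3) ^ s) := by rw [one_mul, ← mul_pow]; norm_num
        _ ≤ _ := by gcongr
    have : 0 ≤ (s : ℝ) / k := by positivity
    linarith

theorem main_ineq (f : (Fin n → Bool) → Bool) (k : ℝ) (hk : 0 < k) :
    4 * (meanB f * (1 - meanB f)) ≤ (∑ i, infl f i) / k + Real.exp (2 * k) * ∑ i, lev f i := by
  rw [var_eq, sum_infl, sum_lev, Finset.sum_div, Finset.mul_sum, Finset.mul_sum,
    ← Finset.sum_add_distrib]
  refine Finset.sum_le_sum fun S _ => ?_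
  split_ifs with h
  · simp [h]
  · have := mul_le_mul_of_nonneg_right (scalar k hk S.card h)
      (show 0 ≤ 4 * hat (toR f) S ^ 2 by positivity)
    calc _ = 1 * (4 * hat (toR f) S ^ 2) := by ring
      _ ≤ _ := this
      _ = _ := by ring

theorem infl_nonneg (f : (Fin n → Bool) → Bool) (i : Fin n) : 0 ≤ infl f i := by
  rw [← dif_sq]; exact cubeE_nonneg _ fun x => by positivity

theorem kkl_core (hn : 2 ≤ n) (f : (Fin n → Bool) → Bool) :
    ∃ i : Fin n, infl f i ≥ (1/6) * meanB f * (1 - meanB f) * Real.log n / n := by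
  by_contra! hcon
  set W := meanB f * (1 - meanB f) with hW
  have hW4 : W ≤ 1 := by nlinarith [sq_nonneg (meanB f - 1/2)]
  have hn0 : (0 : ℝ) < n := by positivity
  set L := Real.log n with hL
  have hLpos : 0 < L := Real.log_pos (by exact_mod_cast hn)
  set δ := W * L / (6 * n) with hδ
  have hlt : ∀ i, infl f i < δ := fun i => by
    have := hcon i
    rw [hδ]
    refine this.trans_eq ?_
    rw [hW]; field_simp
  have hδ0 : 0 < δ := (infl_nonneg f ⟨0, by omega⟩).trans_lt (hlt ⟨0, by omega⟩)
  have hWpos : 0 < W := by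
    by_contra! hneg
    have : δ ≤ 0 := div_nonpos_of_nonpos_of_nonneg
      (mul_nonpos_of_nonpos_of_nonneg hneg hLpos.le) (by positivity)
    linarith
  set v := Real.exp (L / 6) with hv
  have hv0 : 0 < v := Real.exp_pos _
  have hnv : (n : ℝ) = v ^ 6 := by
    rw [hv, ← Real.exp_nat_mul, ← Real.exp_log hn0]
    congr 1; push_cast; rw [← hL]; ring
  have hLv : L ≤ 6 * v := by
    have := Real.add_one_le_exp (L / 6); linarith
  have hδv : δ ≤ W / v ^ 5 := by
    rw [hδ, hnv, div_le_div_iff₀ (by positivity) (by positivity)]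
    calc W * L * v ^ 5 ≤ W * (6 * v) * v ^ 5 := by gcongr
      _ = _ := by ring
  have hm := main_ineq f (L / 8) (by positivity)
  have hsum : ∑ i, infl f i ≤ n * δ := by
    calc _ ≤ ∑ i : Fin n, δ := Finset.sum_le_sum fun i _ => (hlt i).le
      _ = _ := by simp
  have hE : Real.exp (2 * (L / 8)) ^ 2 = v ^ 3 := by
    rw [hv, ← Real.exp_nat_mul, ← Real.exp_nat_mul]; congr 1; push_cast; ring
  set X := Real.exp (2 * (L / 8)) with hX
  have hX0 : 0 < X := Real.exp_pos _
  have hlev : ∀ i, lev f i ≤ W / (X * n) := fun i => by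
    refine (abs_le_of_sq_le_sq' ?_ (by positivity)).2
    calc lev f i ^ 2 ≤ infl f i ^ 3 := lev_sq f i
      _ ≤ (W / v ^ 5) ^ 3 := pow_le_pow_left₀ (infl_nonneg f i) ((hlt i).le.trans hδv) 3
      _ = W ^ 3 / (v ^ 3 * (v ^ 6) ^ 2) := by rw [div_pow]; congr 1; ring
      _ ≤ W ^ 2 / (v ^ 3 * (v ^ 6) ^ 2) := by
        gcongr ?_ / _
        exact pow_le_pow_of_le_one hWpos.le hW4 (by norm_num)
      _ = _ := by rw [div_pow W, mul_pow X, hE, hnv]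
  have hsl : X * ∑ i, lev f i ≤ W := by
    calc _ ≤ X * ∑ i : Fin n, W / (X * n) := by
          gcongr with i; exact hlev i
      _ = W := by simp; field_simp
  have hsi : (∑ i, infl f i) / (L / 8) ≤ 4 / 3 * W := by
    rw [div_le_iff₀ (by positivity)]
    refine hsum.trans (le_of_eq ?_)
    rw [hδ]; field_simp; norm_num
  linarith

end KKLAux

/-- **KKL theorem**: there is an absolute constant `c > 0` such that for every `n ≥ 2`
and every Boolean function `f` on `{0,1}^n` with expectation `μ`, some variable has
influence at least `c · μ(1-μ) log n / n`. -/
theorem kkl_max_influence :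
    ∃ c : ℝ, 0 < c ∧ ∀ n : ℕ, 2 ≤ n → ∀ f : (Fin n → Bool) → Bool,
      ∃ i : Fin n, infl f i ≥ c * meanB f * (1 - meanB f) * Real.log n / n :=
  ⟨1 / 6, by norm_num, fun _ hn f => KKLAux.kkl_core hn f⟩
end

section
/- For every Boolean function f : {0,1}^n → {0,1} with expectation μ = E f satisfying 0 < μ < 1, one has Σ_{i=1}^n I_i(f)² ≥ 4 μ(1−μ) · exp( − (1/(2μ(1−μ))) · Σ_{i=1}^n I_i(f) ). -/
open Finset

lemma fs_mono (t : ℝ) (ht : 0 ≤ t) :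
    t * Real.sinh t - Real.cosh t * Real.log (Real.cosh t) ≤ Real.cosh t - 1 := by
  have hd : ∀ s : ℝ, HasDerivAt
      (fun s => 1 - (Real.cosh s)⁻¹ - s * (Real.sinh s / Real.cosh s) + Real.log (Real.cosh s))
      ((Real.sinh s - s) / (Real.cosh s) ^ 2) s := by
    intro s
    have hc : Real.cosh s ≠ 0 := (Real.cosh_pos s).ne'
    have h1 := (Real.hasDerivAt_cosh s).inv hc
    have h2 := (hasDerivAt_id s).mul ((Real.hasDerivAt_sinh s).div (Real.hasDerivAt_cosh s) hc)
    have h3 := (Real.hasDerivAt_cosh s).log hc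
    have h4 := (((hasDerivAt_const s (1:ℝ)).sub h1).sub h2).add h3
    refine h4.congr_deriv ?_
    have hsq := Real.cosh_sq s
    simp only [id, Pi.div_apply]
    field_simp
    rw [hsq]
    ring
  have hm : MonotoneOn
      (fun s => 1 - (Real.cosh s)⁻¹ - s * (Real.sinh s / Real.cosh s) + Real.log (Real.cosh s))
      (Set.Ici (0:ℝ)) := by
    apply monotoneOn_of_deriv_nonneg (convex_Ici 0)
    · exact fun s _ => (hd s).continuousAt.continuousWithinAt
    · exact fun s _ => (hd s).differentiableAt.differentiableWithinAt
    · intro s hs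
      rw [interior_Ici] at hs
      rw [(hd s).deriv]
      have : s ≤ Real.sinh s := Real.self_le_sinh_iff.2 (le_of_lt hs)
      have := Real.cosh_pos s
      apply div_nonneg <;> [linarith; positivity]
  have h := hm (Set.mem_Ici.2 le_rfl) (Set.mem_Ici.2 ht) ht
  simp at h
  have hc := Real.cosh_pos t
  have h2 := mul_le_mul_of_nonneg_left h hc.le
  have e : Real.cosh t * (1 - (Real.cosh t)⁻¹ - t * (Real.sinh t / Real.cosh t)
      + Real.log (Real.cosh t)) =
      Real.cosh t - 1 - t * Real.sinh t + Real.cosh t * Real.log (Real.cosh t) := by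
    field_simp
  rw [e] at h2
  linarith

lemma fs_all (t : ℝ) :
    t * Real.sinh t - Real.cosh t * Real.log (Real.cosh t) ≤ Real.cosh t - 1 := by
  rcases le_total 0 t with h | h
  · exact fs_mono t h
  · have := fs_mono (-t) (by linarith)
    simpa using this

lemma fs_two_point_pos (c t : ℝ) (hc : 0 < c) :
    ((c * Real.exp t) * Real.log (c * Real.exp t)
      + (c * Real.exp (-t)) * Real.log (c * Real.exp (-t))) / 2
      - (c * Real.cosh t) * Real.log (c * Real.cosh t) ≤ c * Real.cosh t - c := by
  rw [Real.log_mul hc.ne' (Real.exp_pos _).ne', Real.log_mul hc.ne' (Real.exp_pos _).ne',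
    Real.log_mul hc.ne' (Real.cosh_pos _).ne', Real.log_exp, Real.log_exp]
  have h := mul_le_mul_of_nonneg_left (fs_all t) hc.le
  have e1 := Real.cosh_eq t
  have e2 := Real.sinh_eq t
  have : ((c * Real.exp t) * (Real.log c + t) + (c * Real.exp (-t)) * (Real.log c + -t)) / 2
      = c * Real.cosh t * Real.log c + c * (t * Real.sinh t) := by
    rw [e1, e2]; ring
  rw [this]
  linarith

lemma fs_two_point_zero (x : ℝ) (hx : 0 ≤ x) :
    x * Real.log x / 2 - (x / 2) * Real.log (x / 2) ≤ x / 2 := by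
  rcases hx.eq_or_lt with h | h
  · simp [← h]
  · rw [Real.log_div h.ne' (by norm_num)]
    have := Real.log_two_lt_d9
    nlinarith

lemma fs_two_point (x y : ℝ) (hx : 0 ≤ x) (hy : 0 ≤ y) :
    (x * Real.log x + y * Real.log y) / 2 - ((x + y) / 2) * Real.log ((x + y) / 2)
      ≤ (x + y) / 2 - √x * √y := by
  rcases hx.eq_or_lt with h | h
  · subst h; simpa using fs_two_point_zero y hy
  rcases hy.eq_or_lt with h' | h'
  · subst h'; simpa using fs_two_point_zero x hx
  have hp := fs_two_point_pos (√x * √y) (Real.log (√x / √y)) (by positivity)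
  have sx : 0 < √x := by positivity
  have sy : 0 < √y := by positivity
  have ex : √x * √y * Real.exp (Real.log (√x / √y)) = x := by
    rw [Real.exp_log (by positivity)]
    field_simp
    exact Real.sq_sqrt hx
  have ey : √x * √y * Real.exp (-Real.log (√x / √y)) = y := by
    rw [Real.exp_neg, Real.exp_log (by positivity)]
    field_simp
    exact Real.sq_sqrt hy
  have ec : √x * √y * Real.cosh (Real.log (√x / √y)) = (x + y) / 2 := by
    rw [Real.cosh_eq]; linarith
  rw [ex, ey, ec] at hp
  exact hp

lemma cubeE_succ {n : ℕ} (g : (Fin (n+1) → Bool) → ℝ) :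
    cubeE g = (cubeE (fun x => g (Fin.cons false x)) + cubeE (fun x => g (Fin.cons true x))) / 2 := by
  unfold cubeE
  have : ∑ x, g x = ∑ p : Bool × (Fin n → Bool), g (Fin.cons p.1 p.2) :=
    (Fintype.sum_equiv (Fin.consEquiv (fun _ => Bool)) _ _ (fun p => rfl)).symm
  rw [this, Fintype.sum_prod_type, Fintype.sum_bool, pow_succ]
  field_simp
  ring

lemma cubeE_zero (g : (Fin 0 → Bool) → ℝ) : cubeE g = g Fin.elim0 := by
  simp only [cubeE, Fintype.sum_unique, pow_zero, div_one]
  exact congrArg g (Subsingleton.elim _ _)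

lemma flip_zero {n : ℕ} (b : Bool) (x : Fin n → Bool) :
    flipAt (Fin.cons b x : Fin (n+1) → Bool) 0 = Fin.cons (!b) x := by
  simp [flipAt, Fin.update_cons_zero]

lemma flip_succ {n : ℕ} (b : Bool) (x : Fin n → Bool) (i : Fin n) :
    flipAt (Fin.cons b x : Fin (n+1) → Bool) i.succ = Fin.cons b (flipAt x i) := by
  simp [flipAt, Fin.cons_update]

lemma cubeE_add {n : ℕ} (f g : (Fin n → Bool) → ℝ) :
    cubeE (fun x => f x + g x) = cubeE f + cubeE g := by
  simp [cubeE, Finset.sum_add_distrib, add_div]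

lemma cubeE_smul {n : ℕ} (c : ℝ) (f : (Fin n → Bool) → ℝ) :
    cubeE (fun x => c * f x) = c * cubeE f := by
  simp [cubeE, ← Finset.mul_sum, mul_div_assoc]

lemma cubeE_mono {n : ℕ} (f g : (Fin n → Bool) → ℝ) (h : ∀ x, f x ≤ g x) :
    cubeE f ≤ cubeE g := by
  unfold cubeE
  gcongr
  exact h _

lemma cubeE_nonneg {n : ℕ} (f : (Fin n → Bool) → ℝ) (h : ∀ x, 0 ≤ f x) :
    0 ≤ cubeE f := by
  unfold cubeE
  exact div_nonneg (Finset.sum_nonneg fun x _ => h x) (by positivity)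

lemma cubeE_eq_zero {n : ℕ} (f : (Fin n → Bool) → ℝ) (h : ∀ x, 0 ≤ f x) (h0 : cubeE f = 0) :
    ∀ x, f x = 0 := by
  unfold cubeE at h0
  have h1 : ∑ x, f x = 0 := by
    rcases div_eq_zero_iff.1 h0 with h | h
    · exact h
    · exact absurd h (by positivity)
  intro x
  exact (Finset.sum_eq_zero_iff_of_nonneg (fun x _ => h x)).1 h1 x (Finset.mem_univ x)

lemma cubeE_sum {n m : ℕ} (f : Fin m → (Fin n → Bool) → ℝ) :
    cubeE (fun x => ∑ i, f i x) = ∑ i, cubeE (f i) := by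
  simp only [cubeE]
  rw [Finset.sum_comm, Finset.sum_div]

lemma cubeE_mul_le {n : ℕ} (f g : (Fin n → Bool) → ℝ) :
    cubeE (fun x => f x * g x) ≤ √(cubeE (fun x => f x ^ 2)) * √(cubeE (fun x => g x ^ 2)) := by
  unfold cubeE
  have h := Real.sum_mul_le_sqrt_mul_sqrt Finset.univ f g
  rw [Real.sqrt_div' _ (by positivity), Real.sqrt_div' _ (by positivity), div_mul_div_comm,
    Real.mul_self_sqrt (by positivity)]
  gcongr

lemma energy_succ {n : ℕ} (g : (Fin (n+1) → Bool) → ℝ) :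
    energy g = (energy (fun x => g (Fin.cons false x)) + energy (fun x => g (Fin.cons true x))) / 2
      + cubeE (fun x => (g (Fin.cons false x) - g (Fin.cons true x)) ^ 2) := by
  unfold energy
  rw [cubeE_succ]
  simp only [Fin.sum_univ_succ, flip_zero, flip_succ, Bool.not_false, Bool.not_true]
  rw [cubeE_add, cubeE_add]
  have : cubeE (fun x => (g (Fin.cons true x) - g (Fin.cons false x)) ^ 2)
      = cubeE (fun x => (g (Fin.cons false x) - g (Fin.cons true x)) ^ 2) := by
    congr 1; funext x; ring
  rw [this]
  ring

lemma cubeE_sub_sq {n : ℕ} (f g : (Fin n → Bool) → ℝ) :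
    cubeE (fun x => (f x - g x) ^ 2) = cubeE (fun x => f x ^ 2) + cubeE (fun x => g x ^ 2)
      - 2 * cubeE (fun x => f x * g x) := by
  have : (fun x => (f x - g x) ^ 2) = fun x => (f x ^ 2 + g x ^ 2) + (-2) * (f x * g x) := by
    funext x; ring
  rw [this, cubeE_add, cubeE_add, cubeE_smul]
  ring

lemma cubeE_add_sq {n : ℕ} (f g : (Fin n → Bool) → ℝ) :
    cubeE (fun x => (f x + g x) ^ 2) = cubeE (fun x => f x ^ 2) + cubeE (fun x => g x ^ 2)
      + 2 * cubeE (fun x => f x * g x) := by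
  have : (fun x => (f x + g x) ^ 2) = fun x => (f x ^ 2 + g x ^ 2) + 2 * (f x * g x) := by
    funext x; ring
  rw [this, cubeE_add, cubeE_add, cubeE_smul]

/-- Logarithmic Sobolev inequality on the discrete cube. -/
lemma log_sobolev : ∀ {n : ℕ} (g : (Fin n → Bool) → ℝ),
    ent (fun x => g x ^ 2) ≤ 1 / 2 * energy g := by
  intro n
  induction n with
  | zero => intro g; simp [ent, energy, cubeE_zero]
  | succ n ih =>
    intro g
    have h0 := ih (fun x => g (Fin.cons false x))
    have h1 := ih (fun x => g (Fin.cons true x))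
    have ht := fs_two_point (cubeE (fun x => g (Fin.cons false x) ^ 2))
      (cubeE (fun x => g (Fin.cons true x) ^ 2))
      (cubeE_nonneg _ fun x => sq_nonneg _) (cubeE_nonneg _ fun x => sq_nonneg _)
    have hcs := cubeE_mul_le (fun x => g (Fin.cons false x)) (fun x => g (Fin.cons true x))
    have hs := cubeE_sub_sq (fun x => g (Fin.cons false x)) (fun x => g (Fin.cons true x))
    rw [energy_succ, hs]
    unfold ent at h0 h1 ⊢
    rw [cubeE_succ (fun x => g x ^ 2), cubeE_succ (fun x => g x ^ 2 * Real.log (g x ^ 2))]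
    linarith

lemma ent_lower {n : ℕ} (h : (Fin n → Bool) → ℝ) (l : ℝ) :
    l * cubeE (fun x => h x ^ 2) - Real.exp (l - 1) * cubeE (fun x => |h x|) ^ 2
      ≤ ent (fun x => h x ^ 2) := by
  set M := cubeE (fun x => h x ^ 2) with hM
  set K := cubeE (fun x => |h x|) with hK
  have hK0 : 0 ≤ K := cubeE_nonneg _ fun x => abs_nonneg _
  rcases hK0.eq_or_lt with hk | hk
  · have hz : ∀ x, h x = 0 := fun x => by
      simpa using cubeE_eq_zero _ (fun x => abs_nonneg _) hk.symm x
    have hM0 : M = 0 := by simp [hM, hz, cubeE]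
    have he : ent (fun x => h x ^ 2) = 0 := by simp [hz, ent, cubeE]
    rw [he, hM0, ← hk]; simp
  have hMp : 0 < M := by
    rcases (cubeE_nonneg _ fun x => sq_nonneg (h x)).eq_or_lt with hm | hm
    · exfalso
      have hz : ∀ x, h x = 0 := fun x => by
        simpa using cubeE_eq_zero _ (fun x => sq_nonneg _) hm.symm x
      have : K = 0 := by simp [hK, hz, cubeE]
      linarith
    · exact hm
  have hpt : ∀ x, (2 + 2 * Real.log (M / K)) * h x ^ 2 + (-(2 * (M / K))) * |h x|
      ≤ h x ^ 2 * Real.log (h x ^ 2) := by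
    intro x
    by_cases hx : h x = 0
    · simp [hx]
    have ha : 0 < |h x| := abs_pos.2 hx
    have hl := Real.log_le_sub_one_of_pos (show 0 < M / K / |h x| by positivity)
    rw [Real.log_div (by positivity) ha.ne'] at hl
    rw [← sq_abs (h x), Real.log_pow]
    have h2 := mul_le_mul_of_nonneg_left hl (show 0 ≤ 2 * |h x| ^ 2 by positivity)
    have e : 2 * |h x| ^ 2 * (M / K / |h x| - 1) = 2 * (M / K) * |h x| - 2 * |h x| ^ 2 := by
      field_simp
    rw [e] at h2
    push_cast
    linarith
  have hi := cubeE_mono _ _ hpt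
  rw [cubeE_add, cubeE_smul, cubeE_smul, ← hM, ← hK] at hi
  have e1 : -(2 * (M / K)) * K = -2 * M := by field_simp
  rw [e1, Real.log_div hMp.ne' hk.ne'] at hi
  have hz := Real.log_le_sub_one_of_pos (show 0 < Real.exp (l - 1) * (K ^ 2 / M) by positivity)
  rw [Real.log_mul (by positivity) (by positivity), Real.log_exp,
    Real.log_div (by positivity) hMp.ne', Real.log_pow] at hz
  have h3 := mul_le_mul_of_nonneg_left hz hMp.le
  have e2 : M * (Real.exp (l - 1) * (K ^ 2 / M) - 1) = Real.exp (l - 1) * K ^ 2 - M := by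
    field_simp
  rw [e2] at h3
  push_cast at h3
  unfold ent
  rw [← hM]
  linarith

lemma energy_add_sub {n : ℕ} (f g : (Fin n → Bool) → ℝ) :
    (energy f + energy g) / 2 = energy (fun x => (f x + g x) / 2)
      + energy (fun x => (f x - g x) / 2) := by
  unfold energy
  rw [← cubeE_add, ← cubeE_add, div_eq_inv_mul, ← cubeE_smul]
  congr 1; funext x
  rw [← Finset.sum_add_distrib, ← Finset.sum_add_distrib, Finset.mul_sum]
  apply Finset.sum_congr rfl
  intro i _
  ring

/-- Linearized Falik–Samorodnitsky inequality. -/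
lemma falik_samorodnitsky (l : ℝ) : ∀ {n : ℕ} (f : (Fin n → Bool) → ℝ),
    l * (cubeE (fun x => f x ^ 2) - cubeE f ^ 2)
      - Real.exp (l - 1) * ∑ i, (cubeE (fun x => |f x - f (flipAt x i)|) / 2) ^ 2
      ≤ 1 / 2 * energy f := by
  intro n
  induction n with
  | zero => intro f; simp [energy, cubeE_zero]
  | succ n ih =>
    intro f
    set f0 : (Fin n → Bool) → ℝ := fun x => f (Fin.cons false x) with hf0
    set f1 : (Fin n → Bool) → ℝ := fun x => f (Fin.cons true x) with hf1
    have hT := ih (fun x => (f0 x + f1 x) / 2)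
    have hh := (ent_lower (fun x => (f0 x - f1 x) / 2) l).trans (log_sobolev _)
    have hen := energy_succ f
    rw [energy_add_sub] at hen
    have hpos : 0 ≤ cubeE (fun x => (f (Fin.cons false x) - f (Fin.cons true x)) ^ 2) :=
      cubeE_nonneg _ fun x => sq_nonneg _
    have hV : cubeE (fun x => f x ^ 2) = cubeE (fun x => ((f0 x + f1 x) / 2) ^ 2)
        + cubeE (fun x => ((f0 x - f1 x) / 2) ^ 2) := by
      rw [cubeE_succ, ← cubeE_add, ← cubeE_add, div_eq_inv_mul, ← cubeE_smul]
      congr 1; funext x; simp only [hf0, hf1]; ring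
    have hm : cubeE f = cubeE (fun x => (f0 x + f1 x) / 2) := by
      rw [cubeE_succ, ← cubeE_add, div_eq_inv_mul, ← cubeE_smul]
      congr 1; funext x; simp only [hf0, hf1]; ring
    have hL0 : cubeE (fun x => |f x - f (flipAt x 0)|) / 2
        = cubeE (fun x => |(f0 x - f1 x) / 2|) := by
      rw [cubeE_succ]
      simp only [flip_zero, Bool.not_false, Bool.not_true]
      rw [← cubeE_add, div_div, div_eq_inv_mul, ← cubeE_smul]
      congr 1; funext x
      simp only [hf0, hf1]
      rw [abs_sub_comm (f (Fin.cons true x)), abs_div, abs_two]; ring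
    have hLs : ∀ i : Fin n, cubeE (fun x => |(f0 x + f1 x) / 2
          - (f0 (flipAt x i) + f1 (flipAt x i)) / 2|)
        ≤ cubeE (fun x => |f x - f (flipAt x i.succ)|) := by
      intro i
      rw [cubeE_succ (fun x => |f x - f (flipAt x i.succ)|)]
      simp only [flip_succ]
      rw [← cubeE_add, div_eq_inv_mul, ← cubeE_smul]
      apply cubeE_mono
      intro x
      have e : (f0 x + f1 x) / 2 - (f0 (flipAt x i) + f1 (flipAt x i)) / 2
        = 2⁻¹ * ((f0 x - f0 (flipAt x i)) + (f1 x - f1 (flipAt x i))) := by ring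
      rw [e, abs_mul, abs_of_pos (show (0:ℝ) < 2⁻¹ by norm_num)]
      exact mul_le_mul_of_nonneg_left (abs_add_le _ _) (by norm_num)
    have hS : ∑ i : Fin n, (cubeE (fun x => |(f0 x + f1 x) / 2
          - (f0 (flipAt x i) + f1 (flipAt x i)) / 2|) / 2) ^ 2
        ≤ ∑ i : Fin n, (cubeE (fun x => |f x - f (flipAt x i.succ)|) / 2) ^ 2 := by
      apply Finset.sum_le_sum
      intro i _
      have := hLs i
      have : 0 ≤ cubeE (fun x => |(f0 x + f1 x) / 2
          - (f0 (flipAt x i) + f1 (flipAt x i)) / 2|) := cubeE_nonneg _ fun x => abs_nonneg _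
      gcongr
    have hS' := mul_le_mul_of_nonneg_left hS (Real.exp_pos (l - 1)).le
    rw [Fin.sum_univ_succ, hL0, hV, hm]
    linarith

/-- For every Boolean function `f` on `{0,1}^n` with expectation `μ ∈ (0,1)`,
`Σ_i I_i(f)² ≥ 4 μ(1-μ) · exp(-(1/(2μ(1-μ))) Σ_i I_i(f))`. -/
theorem sum_sq_influences_exp_lower_bound {n : ℕ} (f : (Fin n → Bool) → Bool)
    (h0 : 0 < meanB f) (h1 : meanB f < 1) :
    ∑ i : Fin n, (infl f i) ^ 2 ≥
      4 * meanB f * (1 - meanB f) *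
        Real.exp (-(1 / (2 * meanB f * (1 - meanB f))) * ∑ i : Fin n, infl f i) := by
  set F : (Fin n → Bool) → ℝ := fun x => if f x then 1 else 0 with hF
  have hinf : ∀ i, infl f i = cubeE (fun x => |F x - F (flipAt x i)|) := by
    intro i
    unfold infl
    congr 1; funext x
    simp only [hF]
    cases f x <;> cases f (flipAt x i) <;> simp
  have hen : energy F = ∑ i, infl f i := by
    unfold energy
    rw [cubeE_sum]
    apply Finset.sum_congr rfl
    intro i _
    unfold infl
    congr 1; funext x
    simp only [hF]
    cases f x <;> cases f (flipAt x i) <;> simp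
  have hsq : cubeE (fun x => F x ^ 2) = meanB f := by
    unfold meanB
    congr 1; funext x
    simp only [hF]
    cases f x <;> simp
  have hmean : cubeE F = meanB f := rfl
  set m := meanB f with hm
  set I := ∑ i, infl f i with hI
  have hVpos : 0 < m * (1 - m) := mul_pos h0 (by linarith)
  have key := falik_samorodnitsky (I / (2 * (m * (1 - m))) + 1) F
  rw [hsq, hmean, hen] at key
  simp only [← hinf] at key
  have e3 : ∑ i, (infl f i / 2) ^ 2 = (∑ i, infl f i ^ 2) / 4 := by
    rw [Finset.sum_div]
    apply Finset.sum_congr rfl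
    intro i _; ring
  rw [e3, add_sub_cancel_right] at key
  have e4 : (I / (2 * (m * (1 - m))) + 1) * (m - m ^ 2) = I / 2 + m * (1 - m) := by
    have : m - m ^ 2 = m * (1 - m) := by ring
    rw [this]
    generalize m * (1 - m) = V at *
    field_simp
  rw [e4] at key
  have e5 : -(1 / (2 * m * (1 - m))) * I = -(I / (2 * (m * (1 - m)))) := by
    rw [mul_assoc]; ring
  rw [e5, Real.exp_neg, ge_iff_le, ← div_eq_mul_inv, div_le_iff₀ (Real.exp_pos _)]
  linarith
end

section
/- For every nonempty subset A ⊆ {0,1}^n with |A| ≤ 2^{n−1}, letting μ = |A|/2^n, the influences of the indicator function of A satisfy Σ_{i=1}^n I_i(1_A) ≥ (2/log 2) · μ · log(1/μ). -/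
open Finset

theorem two_point_ineq (a b : ℝ) (ha : 0 ≤ a) (hab : a ≤ b) :
    2 * a * Real.log 2 ≤ (a + b) * Real.log (a + b) - a * Real.log a - b * Real.log b := by
  rcases ha.eq_or_lt with rfl | ha
  · simp
  have hb : 0 < b := ha.trans_le hab
  have h1 : Real.log 2 + Real.log a ≤ Real.log (a + b) := by
    rw [← Real.log_mul (by norm_num) ha.ne']
    exact Real.log_le_log (by positivity) (by linarith)
  have h2 : a * Real.log 2 ≤ b * (Real.log (a + b) - Real.log b) := by
    have h3 := one_add_mul_self_le_rpow_one_add (s := a / b) (p := b / a)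
      (by have : 0 < a / b := by positivity
          linarith) (by rw [le_div_iff₀ ha]; linarith)
    have h4 : 1 + b / a * (a / b) = 2 := by field_simp; norm_num
    rw [h4] at h3
    have h5 := Real.log_le_log (by norm_num) h3
    rw [Real.log_rpow (by positivity)] at h5
    have h6 : 1 + a / b = (a + b) / b := by field_simp; ring
    rw [h6, Real.log_div (by positivity) hb.ne'] at h5
    calc a * Real.log 2 ≤ a * (b / a * (Real.log (a + b) - Real.log b)) := by gcongr
      _ = _ := by field_simp
  nlinarith

/-- Twice the number of boundary edges. -/
noncomputable def bdry {n : ℕ} (f : (Fin n → Bool) → Bool) : ℝ :=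
  ∑ i : Fin n, ∑ x : Fin n → Bool, if f x ≠ f (flipAt x i) then 1 else 0

/-- Size of the support. -/
noncomputable def size {n : ℕ} (f : (Fin n → Bool) → Bool) : ℝ :=
  ∑ x : Fin n → Bool, if f x then 1 else 0

theorem cube_sum_cons {n : ℕ} (g : (Fin (n + 1) → Bool) → ℝ) :
    ∑ x, g x = ∑ y : Fin n → Bool, g (Fin.cons false y) + ∑ y : Fin n → Bool, g (Fin.cons true y) := by
  rw [← (Fin.consEquiv (fun _ : Fin (n + 1) => Bool)).sum_comp, Fintype.sum_prod_type]
  simp [Fin.consEquiv, add_comm]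

theorem flipAt_cons_zero {n : ℕ} (b : Bool) (y : Fin n → Bool) :
    flipAt (Fin.cons b y : Fin (n + 1) → Bool) 0 = Fin.cons (!b) y := by
  simp [flipAt]

theorem flipAt_cons_succ {n : ℕ} (b : Bool) (y : Fin n → Bool) (i : Fin n) :
    flipAt (Fin.cons b y : Fin (n + 1) → Bool) i.succ = Fin.cons b (flipAt y i) := by
  simp [flipAt, Fin.cons_update]

theorem bdry_succ {n : ℕ} (f : (Fin (n + 1) → Bool) → Bool) :
    bdry (fun y => f (Fin.cons false y)) + bdry (fun y => f (Fin.cons true y)) +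
      2 * |size (fun y => f (Fin.cons false y)) - size (fun y => f (Fin.cons true y))|
      ≤ bdry f := by
  have h : |size (fun y => f (Fin.cons false y)) - size (fun y => f (Fin.cons true y))| ≤
      ∑ y : Fin n → Bool, if f (Fin.cons false y) ≠ f (Fin.cons true y) then (1 : ℝ) else 0 := by
    unfold size
    rw [← Finset.sum_sub_distrib]
    refine (Finset.abs_sum_le_sum_abs _ _).trans (Finset.sum_le_sum fun y _ => ?_)
    cases h0 : f (Fin.cons false y) <;> cases h1 : f (Fin.cons true y) <;> simp [h0, h1]
  have h' : ∑ y : Fin n → Bool, (if f (Fin.cons true y) ≠ f (Fin.cons false y) then (1 : ℝ) else 0) =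
      ∑ y : Fin n → Bool, if f (Fin.cons false y) ≠ f (Fin.cons true y) then (1 : ℝ) else 0 :=
    Finset.sum_congr rfl fun y _ => by simp only [ne_comm]
  have e : bdry f = (∑ y : Fin n → Bool, (if f (Fin.cons false y) ≠ f (Fin.cons true y) then (1 : ℝ) else 0)
      + ∑ y : Fin n → Bool, (if f (Fin.cons true y) ≠ f (Fin.cons false y) then (1 : ℝ) else 0))
      + (bdry (fun y => f (Fin.cons false y)) + bdry (fun y => f (Fin.cons true y))) := by
    unfold bdry
    rw [Fin.sum_univ_succ]
    simp only [cube_sum_cons, Finset.sum_add_distrib, flipAt_cons_zero, flipAt_cons_succ, Bool.not_false, Bool.not_true]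
  rw [e, h']
  linarith

theorem size_nonneg {n : ℕ} (f : (Fin n → Bool) → Bool) : 0 ≤ size f :=
  Finset.sum_nonneg fun x _ => by split_ifs <;> norm_num

theorem bdry_bound {n : ℕ} (f : (Fin n → Bool) → Bool) :
    2 * size f * (n * Real.log 2 - Real.log (size f)) ≤ bdry f * Real.log 2 := by
  induction n with
  | zero =>
    simp only [bdry, size]
    rw [Fintype.sum_unique]
    split_ifs <;> simp
  | succ n ih =>
    have h0 := ih (fun y => f (Fin.cons false y))
    have h1 := ih (fun y => f (Fin.cons true y))
    have hb := bdry_succ f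
    have hs : size f = size (fun y => f (Fin.cons false y)) + size (fun y => f (Fin.cons true y)) := by
      unfold size
      rw [cube_sum_cons]
    rw [hs]
    have n0 := size_nonneg (fun y => f (Fin.cons false y))
    have n1 := size_nonneg (fun y => f (Fin.cons true y))
    generalize size (fun y => f (Fin.cons false y)) = a at *
    generalize size (fun y => f (Fin.cons true y)) = b at *
    generalize bdry (fun y => f (Fin.cons false y)) = p at *
    generalize bdry (fun y => f (Fin.cons true y)) = q at *
    have hb2 := mul_le_mul_of_nonneg_right hb (Real.log_nonneg (by norm_num : (1 : ℝ) ≤ 2))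
    push_cast
    rcases le_total a b with hab | hab
    · have := two_point_ineq a b n0 hab
      rw [abs_of_nonpos (by linarith)] at hb2
      linarith
    · have := two_point_ineq b a n1 hab
      rw [abs_of_nonneg (by linarith)] at hb2
      rw [add_comm b a] at this
      linarith

/-- **Edge-isoperimetric inequality** in the cube: for every nonempty `A ⊆ {0,1}^n`
with `|A| ≤ 2^(n-1)` and `μ = |A|/2^n`, the influences of the indicator of `A` satisfy
`Σ_i I_i(1_A) ≥ (2/log 2) μ log(1/μ)`. -/
theorem edge_isoperimetric_inequality {n : ℕ} (A : Finset (Fin n → Bool))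
    (hA : A.Nonempty) (hcard : A.card ≤ 2 ^ (n - 1)) :
    ∑ i : Fin n, infl (fun x => decide (x ∈ A)) i ≥
      2 / Real.log 2 * ((A.card : ℝ) / 2 ^ n) * Real.log (1 / ((A.card : ℝ) / 2 ^ n)) := by
  have h := bdry_bound (fun x => decide (x ∈ A))
  have hs : size (fun x => decide (x ∈ A)) = (A.card : ℝ) := by
    simp [size]
  have hb : ∑ i : Fin n, infl (fun x => decide (x ∈ A)) i
      = bdry (fun x => decide (x ∈ A)) / 2 ^ n := by
    simp only [infl, cubeE, bdry, Finset.sum_div]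
  have hc : (0 : ℝ) < A.card := by exact_mod_cast hA.card_pos
  have hl : 0 < Real.log 2 := Real.log_pos (by norm_num)
  rw [hs] at h
  rw [hb, ge_iff_le, one_div_div, Real.log_div (by positivity) hc.ne', Real.log_pow,
    le_div_iff₀ (by positivity)]
  rw [← div_le_iff₀ hl] at h
  refine le_trans (le_of_eq ?_) h
  field_simp
end

section
/- For every f : {0,1}^n → ℝ, with E(g,g) = E_x Σ_{j=1}^n (g(x) − g(x⊕e_j))² denoting the Dirichlet form, the martingale differences d_1, …, d_n of f satisfy E(f,f) = Σ_{i=1}^n E(d_i, d_i). -/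
open Finset

theorem flipAt_flipAt {n : ℕ} (x : Fin n → Bool) (i : Fin n) : flipAt (flipAt x i) i = x := by
  simp [flipAt]

theorem sum_flipAt {n : ℕ} (h : (Fin n → Bool) → ℝ) (i : Fin n) :
    ∑ x, h (flipAt x i) = ∑ x, h x :=
  Equiv.sum_comp (Function.Involutive.toPerm (fun x => flipAt x i) (fun x => flipAt_flipAt x i)) h

theorem flipAt_eq_iff {n : ℕ} (x y : Fin n → Bool) (i k : Fin n) :
    flipAt x i k = flipAt y i k ↔ x k = y k := by
  unfold flipAt
  by_cases h : k = i
  · subst h; simp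
  · simp [h]

theorem condE_flip {n : ℕ} (g : (Fin n → Bool) → ℝ) (i : Fin n) (j : ℕ) (x : Fin n → Bool) :
    condE g j (flipAt x i) = condE (fun y => g (flipAt y i)) j x := by
  unfold condE
  rw [← sum_flipAt _ i]
  simp only [flipAt_eq_iff]

theorem condE_sub {n : ℕ} (g h : (Fin n → Bool) → ℝ) (j : ℕ) (x : Fin n → Bool) :
    condE (fun y => g y - h y) j x = condE g j x - condE h j x := by
  unfold condE
  rw [← sub_div, ← Finset.sum_sub_distrib]
  congr 1
  apply Finset.sum_congr rfl
  intro y _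
  split_ifs <;> simp

theorem condE_step {n : ℕ} (g : (Fin n → Bool) → ℝ) (j : Fin n) (x : Fin n → Bool) :
    condE g j x = (condE g (j + 1) x + condE g (j + 1) (flipAt x j)) / 2 := by
  unfold condE
  have e : n - (j : ℕ) = (n - (j + 1)) + 1 := by have := j.2; omega
  rw [e, pow_succ, ← add_div, div_div, ← Finset.sum_add_distrib]
  congr 1
  apply Finset.sum_congr rfl
  intro y _
  have h1 : (∀ k : Fin n, (k : ℕ) < j + 1 → y k = x k) ↔
      (∀ k : Fin n, (k : ℕ) < j → y k = x k) ∧ y j = x j := by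
    constructor
    · intro h
      exact ⟨fun k hk => h k (by omega), h j (by omega)⟩
    · rintro ⟨h, h'⟩ k hk
      by_cases hkj : k = j
      · rw [hkj, h']
      · exact h k (by have : (k : ℕ) ≠ j := fun h => hkj (Fin.ext h)
                      omega)
  have h2 : (∀ k : Fin n, (k : ℕ) < j + 1 → y k = flipAt x j k) ↔
      (∀ k : Fin n, (k : ℕ) < j → y k = x k) ∧ ¬ y j = x j := by
    constructor
    · intro h
      refine ⟨fun k hk => ?_, ?_⟩
      · have hkj : k ≠ j := by rintro rfl; omega
        simpa [flipAt, hkj] using h k (by omega)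
      · simp [h j (by omega), flipAt]
    · rintro ⟨h, h'⟩ k hk
      by_cases hkj : k = j
      · subst hkj
        simpa [flipAt, Bool.eq_not] using h'
      · have : (k : ℕ) ≠ j := fun h => hkj (Fin.ext h)
        simpa [flipAt, hkj] using h k (by omega)
  simp only [h1, h2]
  by_cases ha : ∀ k : Fin n, (k : ℕ) < j → y k = x k <;> by_cases hb : y j = x j <;> simp [ha, hb]

theorem condE_top {n : ℕ} (g : (Fin n → Bool) → ℝ) (x : Fin n → Bool) : condE g n x = g x := by
  unfold condE
  have : ∀ y : Fin n → Bool, (∀ k : Fin n, (k : ℕ) < n → y k = x k) ↔ y = x := fun y =>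
    ⟨fun h => funext fun k => h k k.2, fun h k _ => by rw [h]⟩
  simp only [this]
  simp

theorem sq_step {n : ℕ} (g : (Fin n → Bool) → ℝ) (j : Fin n) :
    ∑ x, (condE g (j + 1) x - condE g j x) ^ 2 =
      ∑ x, condE g (j + 1) x ^ 2 - ∑ x, condE g j x ^ 2 := by
  simp only [condE_step g j]
  have h := sum_flipAt (fun x => condE g (j + 1) x ^ 2) j
  have : ∀ x, (condE g (j + 1) x - (condE g (j + 1) x + condE g (j + 1) (flipAt x j)) / 2) ^ 2 =
      condE g (j + 1) x ^ 2 - ((condE g (j + 1) x + condE g (j + 1) (flipAt x j)) / 2) ^ 2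
      + (condE g (j + 1) (flipAt x j) ^ 2 - condE g (j + 1) x ^ 2) / 2 := fun x => by ring
  simp only [this, Finset.sum_add_distrib, Finset.sum_sub_distrib, ← Finset.sum_div]
  rw [h]; ring

theorem sq_total {n : ℕ} (g : (Fin n → Bool) → ℝ) :
    ∑ i : Fin n, ∑ x, (condE g (i + 1) x - condE g i x) ^ 2 =
      ∑ x, g x ^ 2 - ∑ x, condE g 0 x ^ 2 := by
  simp only [sq_step]
  rw [Fin.sum_univ_eq_sum_range
    (fun i => ∑ x, condE g (i + 1) x ^ 2 - ∑ x, condE g i x ^ 2) n,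
    Finset.sum_range_sub (fun i => ∑ x, condE g i x ^ 2)]
  simp only [condE_top]

/-- The Dirichlet form is additive over the martingale differences:
`E(f,f) = Σ_i E(d_i, d_i)` where `d_i = f_i - f_{i-1}`. -/
theorem energy_additive_over_martingale_differences {n : ℕ} (f : (Fin n → Bool) → ℝ) :
    energy f = ∑ i : Fin n,
      energy (fun x => condE f ((i : ℕ) + 1) x - condE f (i : ℕ) x) := by
  unfold energy cubeE
  rw [← Finset.sum_div]
  congr 1
  rw [Finset.sum_comm]
  have h : ∀ i : Fin n, ∑ x : Fin n → Bool, ∑ k : Fin n,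
      (condE f (i + 1) x - condE f i x -
        (condE f (i + 1) (flipAt x k) - condE f i (flipAt x k))) ^ 2 =
      ∑ k : Fin n, ∑ x, (condE (fun y => f y - f (flipAt y k)) (i + 1) x
        - condE (fun y => f y - f (flipAt y k)) i x) ^ 2 := by
    intro i
    rw [Finset.sum_comm]
    refine Finset.sum_congr rfl fun k _ => Finset.sum_congr rfl fun x _ => ?_
    rw [condE_sub, condE_sub, condE_flip, condE_flip]
    ring
  refine Eq.trans ?_ (Finset.sum_congr rfl fun i _ => (h i).symm)
  symm
  rw [Finset.sum_comm]
  refine Finset.sum_congr rfl fun k _ => ?_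
  rw [sq_total]
  have h0 : ∀ x, condE (fun y => f y - f (flipAt y k)) 0 x = 0 := by
    intro x
    have := sum_flipAt f k
    simp [condE, this]
  simp [h0]
end

section
/- Let f : {0,1}^n → {0,1} be a Boolean function with total influence K = Σ_{i=1}^n I_i(f) > 0, and let 0 < ε < 1. Set α = (ε/K) · exp(−K/(2ε)), let J = { i : I_i(f) ≥ α }, and let g : {0,1}^n → ℝ be the conditional expectation of f given the coordinates in J (i.e., g(x) is the average of f over all y agreeing with x on the coordinates in J). Then |J| ≤ K/α = (K²/ε) · exp(K/(2ε)) and E[(f − g)²] ≤ ε. -/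
open Finset

/-! ### Two-point inequality -/

lemma fj_log_le (y : ℝ) (h0 : 0 < y) (h1 : y < 1) :
    Real.log (1 + y) - Real.log (1 - y) ≤ 2 * y / √(1 - y ^ 2) := by
  have ha : 0 < 1 + y := by linarith
  have hb : 0 < 1 - y := by linarith
  set u := (Real.log (1 + y) - Real.log (1 - y)) / 2 with hu
  have hu0 : 0 ≤ u := by
    have := Real.log_le_log hb (by linarith : 1 - y ≤ 1 + y)
    rw [hu]; linarith
  have h := Real.self_le_sinh_iff.2 hu0
  have hs : Real.sinh u = y / √(1 - y ^ 2) := by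
    have e1 : Real.exp u = √(1 + y) / √(1 - y) := by
      have : u = Real.log (√(1 + y) / √(1 - y)) := by
        rw [Real.log_div (by positivity) (by positivity), Real.log_sqrt ha.le,
          Real.log_sqrt hb.le, hu]; ring
      rw [this, Real.exp_log (by positivity)]
    have e2 : √(1 - y ^ 2) = √(1 + y) * √(1 - y) := by
      rw [← Real.sqrt_mul ha.le]; congr 1; ring
    rw [Real.sinh_eq, Real.exp_neg, e1, e2]
    have s1 := Real.sq_sqrt ha.le
    have s2 := Real.sq_sqrt hb.le
    have p1 : 0 < √(1 + y) := by positivity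
    have p2 : 0 < √(1 - y) := by positivity
    field_simp
    rw [s1, s2]; ring
  rw [hs] at h
  have : 2 * y / √(1 - y ^ 2) = 2 * (y / √(1 - y ^ 2)) := by ring
  rw [this]; linarith

lemma fj_phi (y : ℝ) (h0 : 0 ≤ y) (h1 : y ≤ 1) :
    (1 + y) * Real.log (1 + y) + (1 - y) * Real.log (1 - y) ≤ 2 * (1 - √(1 - y ^ 2)) := by
  let φ : ℝ → ℝ := fun y => 2 * (1 - √(1 - y ^ 2)) -
    ((1 + y) * Real.log (1 + y) + (1 - y) * Real.log (1 - y))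
  have hd : ∀ x ∈ Set.Ioo (0 : ℝ) 1, HasDerivAt φ
      (2 * x / √(1 - x ^ 2) - (Real.log (1 + x) - Real.log (1 - x))) x := by
    intro x hx
    have ha : 1 + x ≠ 0 := by linarith [hx.1]
    have hb : 1 - x ≠ 0 := by linarith [hx.2]
    have hc : 1 - x ^ 2 ≠ 0 := by
      have : 1 - x ^ 2 = (1 + x) * (1 - x) := by ring
      rw [this]; positivity
    have d1 : HasDerivAt (fun y : ℝ => 1 + y) 1 x := (hasDerivAt_id x).const_add 1
    have d2 : HasDerivAt (fun y : ℝ => 1 - y) (-1) x := (hasDerivAt_id x).const_sub 1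
    have d3 : HasDerivAt (fun y : ℝ => 1 - y ^ 2) (-(2 * x)) x := by
      simpa using ((hasDerivAt_pow 2 x).const_sub 1)
    have d4 := (((d3.sqrt hc).const_sub 1).const_mul 2).sub
      ((d1.mul (d1.log ha)).add (d2.mul (d2.log hb)))
    refine d4.congr_deriv ?_
    field_simp
    ring
  have hm : MonotoneOn φ (Set.Icc 0 1) := by
    apply monotoneOn_of_deriv_nonneg (convex_Icc 0 1)
    · apply Continuous.continuousOn
      have c1 : Continuous (fun y : ℝ => (1 + y) * Real.log (1 + y)) :=
        Real.continuous_mul_log.comp (by fun_prop : Continuous fun y : ℝ => 1 + y)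
      have c2 : Continuous (fun y : ℝ => (1 - y) * Real.log (1 - y)) :=
        Real.continuous_mul_log.comp (by fun_prop : Continuous fun y : ℝ => 1 - y)
      have c3 : Continuous (fun y : ℝ => 2 * (1 - √(1 - y ^ 2))) := by fun_prop
      exact c3.sub (c1.add c2)
    · rw [interior_Icc]
      intro x hx
      exact (hd x hx).differentiableAt.differentiableWithinAt
    · rw [interior_Icc]
      intro x hx
      rw [(hd x hx).deriv]
      linarith [fj_log_le x hx.1 hx.2]
  have := hm (by simp : (0 : ℝ) ∈ Set.Icc (0 : ℝ) 1) (⟨h0, h1⟩ : y ∈ Set.Icc (0 : ℝ) 1) h0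
  simp only [φ] at this
  norm_num at this
  linarith

lemma fj_two_aux (p q : ℝ) (hq : 0 ≤ q) (hpq : q ≤ p) :
    (p * Real.log p + q * Real.log q) / 2 - (p + q) / 2 * Real.log ((p + q) / 2)
      ≤ (√p - √q) ^ 2 / 2 := by
  have hp : 0 ≤ p := hq.trans hpq
  rcases hp.eq_or_lt with h | hp
  · have : q = 0 := by linarith
    subst this; subst h; simp
  set m := (p + q) / 2 with hm
  have hm0 : 0 < m := by rw [hm]; linarith
  set y := (p - q) / (p + q) with hy
  have hy0 : 0 ≤ y := div_nonneg (by linarith) (by linarith)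
  have hy1 : y ≤ 1 := by rw [hy, div_le_one (by linarith)]; linarith
  have e1 : p = m * (1 + y) := by rw [hm, hy]; field_simp; ring
  have e2 : q = m * (1 - y) := by rw [hm, hy]; field_simp; ring
  have key := fj_phi y hy0 hy1
  have hl : ∀ t : ℝ, 0 ≤ t →
      m * t * Real.log (m * t) = m * t * Real.log m + m * (t * Real.log t) := by
    intro t ht
    rcases ht.eq_or_lt with h | h
    · subst h; simp
    · rw [Real.log_mul hm0.ne' h.ne']; ring
  have s : (√p - √q) ^ 2 = 2 * m - 2 * (m * √(1 - y ^ 2)) := by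
    have s1 := Real.sq_sqrt hp.le
    have s2 := Real.sq_sqrt hq
    have : √p * √q = m * √(1 - y ^ 2) := by
      rw [← Real.sqrt_mul hp.le]
      have : p * q = m ^ 2 * (1 - y ^ 2) := by rw [e1, e2]; ring
      rw [this, Real.sqrt_mul (by positivity), Real.sqrt_sq hm0.le]
    have h2 : p + q = 2 * m := by rw [hm]; ring
    nlinarith
  have l1 := hl (1 + y) (by linarith)
  have l2 := hl (1 - y) (by linarith)
  rw [← e1] at l1
  rw [← e2] at l2
  rw [s, l1, l2]
  have h3 := mul_le_mul_of_nonneg_left key hm0.le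
  have h2 : p + q = 2 * m := by rw [hm]; ring
  have h4 : p * Real.log m + q * Real.log m = 2 * m * Real.log m := by rw [← h2]; ring
  linarith

lemma fj_two (p q : ℝ) (hp : 0 ≤ p) (hq : 0 ≤ q) :
    (p * Real.log p + q * Real.log q) / 2 - (p + q) / 2 * Real.log ((p + q) / 2)
      ≤ (√p - √q) ^ 2 / 2 := by
  rcases le_total q p with h | h
  · exact fj_two_aux p q hq h
  · have := fj_two_aux q p hp h
    rw [add_comm q p] at this
    nlinarith

lemma fj_mink (a b c d : ℝ) (ha : 0 ≤ a) (hb : 0 ≤ b) (hc : 0 ≤ c) (hd : 0 ≤ d) :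
    (√((a + b) / 2) - √((c + d) / 2)) ^ 2 ≤ ((√a - √c) ^ 2 + (√b - √d) ^ 2) / 2 := by
  have h1 := Real.sq_sqrt ha
  have h2 := Real.sq_sqrt hb
  have h3 := Real.sq_sqrt hc
  have h4 := Real.sq_sqrt hd
  have h5 := Real.sq_sqrt (by positivity : 0 ≤ (a + b) / 2)
  have h6 := Real.sq_sqrt (by positivity : 0 ≤ (c + d) / 2)
  have h7 : (√a * √c + √b * √d) / 2 ≤ √((a + b) / 2) * √((c + d) / 2) := by
    apply (sq_le_sq₀ (by positivity) (by positivity)).1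
    rw [mul_pow, h5, h6]
    nlinarith [sq_nonneg (√a * √d - √b * √c)]
  nlinarith

/-! ### The cube -/

section FJ
variable {n : ℕ}

lemma fj_flip_flip (x : Fin n → Bool) (i : Fin n) : flipAt (flipAt x i) i = x := by
  funext k
  by_cases h : k = i
  · subst h; simp [flipAt]
  · simp [flipAt, h]

lemma fj_flip_comm (x : Fin n → Bool) (i j : Fin n) :
    flipAt (flipAt x i) j = flipAt (flipAt x j) i := by
  funext k
  by_cases h : k = i <;> by_cases h' : k = j
  · subst h; subst h'; rfl
  · subst h; simp [flipAt, Function.update_apply, h']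
  · subst h'; simp [flipAt, Function.update_apply, h]
  · simp [flipAt, h, h']

lemma fj_E_flip (u : (Fin n → Bool) → ℝ) (i : Fin n) :
    cubeE (fun x => u (flipAt x i)) = cubeE u := by
  unfold cubeE
  congr 1
  let e : (Fin n → Bool) ≃ (Fin n → Bool) :=
    ⟨fun x => flipAt x i, fun x => flipAt x i, fun x => fj_flip_flip x i,
      fun x => fj_flip_flip x i⟩
  exact Equiv.sum_comp e u

lemma fj_E_add (u v : (Fin n → Bool) → ℝ) :
    cubeE (fun x => u x + v x) = cubeE u + cubeE v := by
  unfold cubeE; rw [Finset.sum_add_distrib, add_div]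

lemma fj_E_sub (u v : (Fin n → Bool) → ℝ) :
    cubeE (fun x => u x - v x) = cubeE u - cubeE v := by
  unfold cubeE; rw [Finset.sum_sub_distrib, sub_div]

lemma fj_E_smul (c : ℝ) (u : (Fin n → Bool) → ℝ) :
    cubeE (fun x => c * u x) = c * cubeE u := by
  unfold cubeE; rw [← Finset.mul_sum, mul_div_assoc]

lemma fj_E_const (c : ℝ) : cubeE (fun _ : Fin n → Bool => c) = c := by
  unfold cubeE; simp

lemma fj_E_mono (u v : (Fin n → Bool) → ℝ) (h : ∀ x, u x ≤ v x) : cubeE u ≤ cubeE v := by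
  unfold cubeE
  gcongr with x
  exact h x

lemma fj_E_nonneg (u : (Fin n → Bool) → ℝ) (h : ∀ x, 0 ≤ u x) : 0 ≤ cubeE u := by
  unfold cubeE
  exact div_nonneg (Finset.sum_nonneg fun x _ => h x) (by positivity)

/-- symmetrisation -/
lemma fj_E_symm (u : (Fin n → Bool) → ℝ) (i : Fin n) :
    cubeE u = cubeE (fun x => (u x + u (flipAt x i)) / 2) := by
  have h : (fun x => (u x + u (flipAt x i)) / 2)
      = fun x => (1 / 2) * (u x + u (flipAt x i)) := by funext x; ring
  rw [h, fj_E_smul (1 / 2) (fun x => u x + u (flipAt x i)),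
    fj_E_add u (fun x => u (flipAt x i)), fj_E_flip]
  ring

lemma fj_energy (u : (Fin n → Bool) → ℝ) :
    energy u = ∑ i, cubeE (fun x => (u x - u (flipAt x i)) ^ 2) := by
  unfold energy cubeE
  rw [Finset.sum_comm, Finset.sum_div]

/-- average over the coordinates in `S` -/
noncomputable def fjA (S : Finset (Fin n)) (u : (Fin n → Bool) → ℝ) (x : Fin n → Bool) : ℝ :=
  (∑ y : Fin n → Bool, if ∀ i, i ∉ S → y i = x i then u y else 0) / 2 ^ S.card

lemma fjA_empty (u : (Fin n → Bool) → ℝ) : fjA ∅ u = u := by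
  funext x
  have : ∀ y : Fin n → Bool, (∀ i, i ∉ (∅ : Finset (Fin n)) → y i = x i) ↔ y = x := by
    intro y; simp [funext_iff]
  simp [fjA, ← funext_iff]

lemma fjA_univ (u : (Fin n → Bool) → ℝ) (x : Fin n → Bool) : fjA univ u x = cubeE u := by
  simp [fjA, cubeE]

lemma fjA_insert (S : Finset (Fin n)) (i : Fin n) (hi : i ∉ S) (u : (Fin n → Bool) → ℝ)
    (x : Fin n → Bool) :
    fjA (insert i S) u x = (fjA S u x + fjA S u (flipAt x i)) / 2 := by
  unfold fjA
  rw [← add_div, ← Finset.sum_add_distrib, div_div, Finset.card_insert_of_notMem hi, pow_succ]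
  congr 1
  apply Finset.sum_congr rfl
  intro y _
  by_cases h : ∀ k, k ∉ insert i S → y k = x k
  · rw [if_pos h]
    by_cases hy : y i = x i
    · rw [if_pos, if_neg, add_zero]
      · intro h'
        have := h' i hi
        simp [flipAt, hy] at this
      · intro k hk
        by_cases hki : k = i
        · rw [hki, hy]
        · exact h k (by simp [hki, hk])
    · rw [if_neg, if_pos, zero_add]
      · intro k hk
        by_cases hki : k = i
        · subst hki
          simp only [flipAt, Function.update_self]
          exact Bool.eq_not.2 hy
        · simp only [flipAt, Function.update_of_ne hki]
          exact h k (by simp [hki, hk])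
      · intro h'; exact hy (h' i hi)
  · rw [if_neg h, if_neg, if_neg, add_zero]
    · intro h'; apply h; intro k hk
      simp only [Finset.mem_insert, not_or] at hk
      have := h' k hk.2
      simpa [flipAt, Function.update_of_ne hk.1] using this
    · intro h'; apply h; intro k hk
      simp only [Finset.mem_insert, not_or] at hk
      exact h' k hk.2

lemma fjA_inv (S : Finset (Fin n)) (i : Fin n) (hi : i ∈ S) (u : (Fin n → Bool) → ℝ)
    (x : Fin n → Bool) : fjA S u (flipAt x i) = fjA S u x := by
  unfold fjA
  congr 1
  apply Finset.sum_congr rfl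
  intro y _
  have : (∀ k, k ∉ S → y k = flipAt x i k) ↔ (∀ k, k ∉ S → y k = x k) := by
    refine forall_congr' fun k => forall_congr' fun hk => ?_
    have : k ≠ i := fun h => hk (h ▸ hi)
    simp [flipAt, this]
  simp only [this]

lemma fjA_nonneg (S : Finset (Fin n)) (u : (Fin n → Bool) → ℝ) (hu : ∀ x, 0 ≤ u x)
    (x : Fin n → Bool) : 0 ≤ fjA S u x := by
  unfold fjA
  refine div_nonneg (Finset.sum_nonneg fun y _ => ?_) (by positivity)
  split_ifs
  · exact hu y
  · exact le_rfl

lemma fj_adj (u : (Fin n → Bool) → ℝ) (S : Finset (Fin n)) :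
    ∀ φ : (Fin n → Bool) → ℝ, (∀ i ∈ S, ∀ x, φ (flipAt x i) = φ x) →
      cubeE (fun x => φ x * u x) = cubeE (fun x => φ x * fjA S u x) := by
  induction S using Finset.induction_on with
  | empty => intro φ _; rw [fjA_empty]
  | insert i S hi ih =>
    intro φ hφ
    rw [ih φ (fun j hj => hφ j (Finset.mem_insert_of_mem hj)), fj_E_symm _ i]
    congr 1
    funext x
    rw [fjA_insert S i hi, hφ i (Finset.mem_insert_self _ _)]
    ring

lemma fj_contr_sqrt (w : (Fin n → Bool) → ℝ) (hw : ∀ x, 0 ≤ w x) (i : Fin n)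
    (S : Finset (Fin n)) :
    cubeE (fun x => (√(fjA S w x) - √(fjA S w (flipAt x i))) ^ 2)
      ≤ cubeE (fun x => (√(w x) - √(w (flipAt x i))) ^ 2) := by
  induction S using Finset.induction_on with
  | empty => rw [fjA_empty]
  | insert j S hj ih =>
    refine le_trans ?_ ih
    rw [fj_E_symm (fun x => (√(fjA S w x) - √(fjA S w (flipAt x i))) ^ 2) j]
    apply fj_E_mono
    intro x
    rw [fjA_insert S j hj, fjA_insert S j hj, fj_flip_comm x i j]
    have h := fun x => fjA_nonneg S w hw x
    exact fj_mink _ _ _ _ (h _) (h _) (h _) (h _)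

lemma fj_contr_abs (w : (Fin n → Bool) → ℝ) (i : Fin n)
    (S : Finset (Fin n)) :
    cubeE (fun x => |fjA S w x - fjA S w (flipAt x i)|)
      ≤ cubeE (fun x => |w x - w (flipAt x i)|) := by
  induction S using Finset.induction_on with
  | empty => rw [fjA_empty]
  | insert j S hj ih =>
    refine le_trans ?_ ih
    rw [fj_E_symm (fun x => |fjA S w x - fjA S w (flipAt x i)|) j]
    apply fj_E_mono
    intro x
    rw [fjA_insert S j hj, fjA_insert S j hj, fj_flip_comm x i j]
    rw [show ∀ a b c d : ℝ, (a + b) / 2 - (c + d) / 2 = ((a - c) + (b - d)) / 2 by intros; ring,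
      abs_div, abs_two]
    gcongr
    exact abs_add_le _ _

/-- partial log-Sobolev -/
lemma fj_ls_partial (w : (Fin n → Bool) → ℝ) (hw : ∀ x, 0 ≤ w x) (S : Finset (Fin n)) :
    cubeE (fun x => w x * Real.log (w x)) - cubeE (fun x => fjA S w x * Real.log (fjA S w x))
      ≤ ∑ i ∈ S, cubeE (fun x => (√(w x) - √(w (flipAt x i))) ^ 2) / 2 := by
  induction S using Finset.induction_on with
  | empty => rw [fjA_empty]; simp
  | insert i S hi ih =>
    rw [Finset.sum_insert hi]
    have h := fun x => fjA_nonneg S w hw x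
    have h1 : cubeE (fun x => fjA S w x * Real.log (fjA S w x))
        - cubeE (fun x => fjA (insert i S) w x * Real.log (fjA (insert i S) w x))
        ≤ cubeE (fun x => (√(fjA S w x) - √(fjA S w (flipAt x i))) ^ 2) / 2 := by
      rw [fj_E_symm (fun x => fjA S w x * Real.log (fjA S w x)) i, ← fj_E_sub,
        div_eq_inv_mul, ← fj_E_smul]
      apply fj_E_mono
      intro x
      rw [fjA_insert S i hi, ← div_eq_inv_mul]
      exact fj_two _ _ (h _) (h _)
    have h2 := fj_contr_sqrt w hw i S
    linarith

lemma fj_ls (u : (Fin n → Bool) → ℝ) :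
    cubeE (fun x => u x ^ 2 * Real.log (u x ^ 2))
      - cubeE (fun x => u x ^ 2) * Real.log (cubeE (fun x => u x ^ 2)) ≤ energy u / 2 := by
  have h := fj_ls_partial (fun x => u x ^ 2) (fun x => sq_nonneg _) univ
  simp only [fjA_univ, fj_E_const] at h
  refine h.trans ?_
  rw [fj_energy, Finset.sum_div]
  gcongr with i
  apply fj_E_mono
  intro x
  rw [Real.sqrt_sq_eq_abs, Real.sqrt_sq_eq_abs]
  exact sq_le_sq.2 (abs_abs_sub_abs_le_abs_sub _ _)

lemma fj_young (a b : ℝ) (ha : 0 ≤ a) (hb : 0 < b) :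
    a * Real.log b + a - b ≤ a * Real.log a := by
  rcases ha.eq_or_lt with h | h
  · subst h; simp [hb.le]
  · have := Real.log_le_sub_one_of_pos (div_pos hb h)
    rw [Real.log_div hb.ne' h.ne'] at this
    have h2 := mul_le_mul_of_nonneg_left this ha
    have h3 : a * (b / a - 1) = b - a := by field_simp
    rw [h3] at h2
    linarith

lemma fj_ineq (u : (Fin n → Bool) → ℝ) (c : ℝ) (hc : 0 < c) :
    cubeE (fun x => u x ^ 2) * (1 + Real.log c) - c * cubeE (fun x => |u x|) ^ 2
      ≤ energy u / 2 := by
  set A := cubeE (fun x => u x ^ 2) with hA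
  set B := cubeE (fun x => |u x|) with hB
  have hA0 : 0 ≤ A := fj_E_nonneg _ fun x => sq_nonneg _
  have hB0 : 0 ≤ B := fj_E_nonneg _ fun x => abs_nonneg _
  have hE : 0 ≤ energy u :=
    fj_E_nonneg _ fun x => Finset.sum_nonneg fun i _ => sq_nonneg _
  rcases hA0.eq_or_lt with h | hA1
  · rw [← h]; nlinarith [mul_nonneg hc.le (sq_nonneg B)]
  have hB1 : 0 < B := by
    rcases hB0.eq_or_lt with h | h
    · exfalso
      have hz : ∀ x, u x = 0 := by
        have h' : (∑ x : Fin n → Bool, |u x|) = 0 := by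
          rw [hB] at h; unfold cubeE at h
          have := h.symm
          rw [div_eq_zero_iff] at this
          exact this.resolve_right (by positivity)
        intro x
        have := (Finset.sum_eq_zero_iff_of_nonneg (fun x _ => abs_nonneg (u x))).1 h' x
          (Finset.mem_univ _)
        simpa using this
      have : A = 0 := by rw [hA]; simp [hz, fj_E_const]
      linarith
    · exact h
  have hs : 0 < A / B := div_pos hA1 hB1
  have h1 : 2 * A * Real.log (A / B) ≤ cubeE (fun x => u x ^ 2 * Real.log (u x ^ 2)) := by
    have : cubeE (fun x => (2 * Real.log (A / B) + 2) * u x ^ 2 - 2 * (A / B) * |u x|)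
        ≤ cubeE (fun x => u x ^ 2 * Real.log (u x ^ 2)) := by
      apply fj_E_mono
      intro x
      have := mul_le_mul_of_nonneg_left (fj_young |u x| (A / B) (abs_nonneg _) hs)
        (abs_nonneg (u x))
      rw [Real.log_pow, ← Real.log_abs (u x)]
      have h2 := sq_abs (u x)
      rw [← h2]
      push_cast
      nlinarith
    rw [fj_E_sub (fun x => (2 * Real.log (A / B) + 2) * u x ^ 2) (fun x => 2 * (A / B) * |u x|),
      fj_E_smul, fj_E_smul, ← hA, ← hB] at this
    have e : 2 * (A / B) * B = 2 * A := by field_simp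
    rw [e] at this
    linarith
  have h2 := fj_ls u
  rw [← hA] at h2
  have h3 := fj_young A (c * B ^ 2) hA0 (by positivity)
  rw [Real.log_mul hc.ne' (by positivity), Real.log_pow] at h3
  rw [Real.log_div hA1.ne' hB1.ne'] at h1
  push_cast at h3
  linarith

lemma fj_pyth (u : (Fin n → Bool) → ℝ) (i : Fin n) :
    cubeE (fun x => u x ^ 2) = cubeE (fun x => ((u x + u (flipAt x i)) / 2) ^ 2)
      + cubeE (fun x => ((u x - u (flipAt x i)) / 2) ^ 2) := by
  rw [fj_E_symm (fun x => u x ^ 2) i, ← fj_E_add]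
  congr 1
  funext x
  ring

lemma fj_energy_pyth (u : (Fin n → Bool) → ℝ) (i : Fin n) :
    energy u = energy (fun x => (u x + u (flipAt x i)) / 2)
      + energy (fun x => (u x - u (flipAt x i)) / 2) := by
  rw [fj_energy, fj_energy, fj_energy, ← Finset.sum_add_distrib]
  apply Finset.sum_congr rfl
  intro j _
  rw [fj_pyth (fun x => u x - u (flipAt x j)) i]
  congr 2 <;>
  · funext x
    rw [fj_flip_comm x i j]
    ring

lemma fj_step (w : (Fin n → Bool) → ℝ) (c : ℝ) (hc : 0 < c) (S : Finset (Fin n)) :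
    energy (fjA S w) + 2 * (1 + Real.log c) *
        (cubeE (fun x => w x ^ 2) - cubeE (fun x => fjA S w x ^ 2))
      - 2 * c * ∑ i ∈ S, cubeE (fun x => |w x - w (flipAt x i)|) ^ 2 ≤ energy w := by
  induction S using Finset.induction_on with
  | empty => rw [fjA_empty]; simp
  | insert i S hi ih =>
    rw [Finset.sum_insert hi]
    have e : fjA (insert i S) w = fun x => (fjA S w x + fjA S w (flipAt x i)) / 2 :=
      funext fun x => fjA_insert S i hi w x
    rw [e]
    have h1 := fj_pyth (fjA S w) i
    have h2 := fj_energy_pyth (fjA S w) i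
    have h3 := fj_ineq (fun x => (fjA S w x - fjA S w (flipAt x i)) / 2) c hc
    have h4 : cubeE (fun x => |(fjA S w x - fjA S w (flipAt x i)) / 2|)
        ≤ cubeE (fun x => |w x - w (flipAt x i)|) := by
      refine le_trans (fj_E_mono _ _ fun x => ?_) (fj_contr_abs w i S)
      rw [abs_div, abs_two]
      linarith [abs_nonneg (fjA S w x - fjA S w (flipAt x i))]
    have h5 := pow_le_pow_left₀ (fj_E_nonneg _ fun x => abs_nonneg _) h4 2
    have h6 := mul_le_mul_of_nonneg_left h5 hc.le
    beta_reduce at *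
    rw [h1] at ih
    nlinarith

end FJ

open scoped Classical in
/-- **Friedgut's junta theorem** (quantitative form): if `f` is Boolean with total
influence `K > 0`, `0 < ε < 1`, `α = (ε/K)·exp(-K/(2ε))`, `J = {i : I_i(f) ≥ α}`, and
`g` is the conditional expectation of `f` given the coordinates in `J`, then
`|J| ≤ K/α = (K²/ε)·exp(K/(2ε))` and `E[(f-g)²] ≤ ε`. -/
theorem friedgut_junta {n : ℕ} (f : (Fin n → Bool) → Bool) (K ε α : ℝ)
    (hK : K = ∑ i : Fin n, infl f i) (hKpos : 0 < K)
    (hε0 : 0 < ε) (hε1 : ε < 1)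
    (hα : α = ε / K * Real.exp (-K / (2 * ε)))
    (J : Finset (Fin n)) (hJ : J = Finset.univ.filter fun i => α ≤ infl f i)
    (g : (Fin n → Bool) → ℝ)
    (hg : ∀ x, g x = (∑ y : Fin n → Bool,
        if ∀ i ∈ J, y i = x i then (if f y then (1 : ℝ) else 0) else 0) / 2 ^ (n - J.card)) :
    (J.card : ℝ) ≤ K / α ∧ K / α = K ^ 2 / ε * Real.exp (K / (2 * ε)) ∧
      cubeE (fun x => ((if f x then (1 : ℝ) else 0) - g x) ^ 2) ≤ ε := by
  have hαpos : 0 < α := by rw [hα]; positivity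
  have hI0 : ∀ i, 0 ≤ infl f i := fun i =>
    fj_E_nonneg _ fun x => by split_ifs <;> norm_num
  refine ⟨?_, ?_, ?_⟩
  · rw [le_div_iff₀ hαpos, hK]
    calc (J.card : ℝ) * α = ∑ i ∈ J, α := by simp
      _ ≤ ∑ i ∈ J, infl f i := by
          apply Finset.sum_le_sum
          intro i hi
          rw [hJ, Finset.mem_filter] at hi
          exact hi.2
      _ ≤ ∑ i, infl f i :=
          Finset.sum_le_sum_of_subset_of_nonneg (Finset.subset_univ _) fun i _ _ => hI0 i
  · rw [hα, neg_div, Real.exp_neg]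
    field_simp
  · set w : (Fin n → Bool) → ℝ := fun x => if f x then (1 : ℝ) else 0 with hw
    have hgA : g = fjA Jᶜ w := by
      funext x
      rw [hg x]
      unfold fjA
      rw [Finset.card_compl, Fintype.card_fin]
      congr 1
      apply Finset.sum_congr rfl
      intro y _
      simp only [Finset.mem_compl, not_not]
      rfl
    have habs : ∀ i, cubeE (fun x => |w x - w (flipAt x i)|) = infl f i := by
      intro i
      unfold infl
      congr 1
      funext x
      simp only [hw]
      cases f x <;> cases f (flipAt x i) <;> simp
    have hen : energy w = K := by
      rw [fj_energy, hK]
      apply Finset.sum_congr rfl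
      intro i _
      unfold infl
      congr 1
      funext x
      simp only [hw]
      cases f x <;> cases f (flipAt x i) <;> simp
    have horth : cubeE (fun x => (w x - g x) ^ 2)
        = cubeE (fun x => w x ^ 2) - cubeE (fun x => g x ^ 2) := by
      have h1 := fj_adj w Jᶜ g (by
        intro i hi x; rw [hgA]; exact fjA_inv _ i hi w x)
      rw [← hgA] at h1
      have h2 : (fun x => (w x - g x) ^ 2)
          = fun x => (w x ^ 2 + g x * g x) - 2 * (g x * w x) := by
        funext x; ring
      have h3 : (fun x => g x ^ 2) = fun x => g x * g x := by funext x; ring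
      rw [h2, h3, fj_E_sub (fun x => w x ^ 2 + g x * g x) (fun x => 2 * (g x * w x)),
        fj_E_add (fun x => w x ^ 2) (fun x => g x * g x),
        fj_E_smul 2 (fun x => g x * w x), h1]
      ring
    have hst := fj_step w (Real.exp (K / (2 * ε))) (Real.exp_pos _) Jᶜ
    rw [← hgA, ← horth, hen, Real.log_exp] at hst
    simp only [habs] at hst
    have hsum : ∑ i ∈ Jᶜ, infl f i ^ 2 ≤ α * K := by
      calc ∑ i ∈ Jᶜ, infl f i ^ 2 ≤ ∑ i ∈ Jᶜ, α * infl f i := by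
            apply Finset.sum_le_sum
            intro i hi
            have : infl f i < α := by
              by_contra h
              rw [Finset.mem_compl, hJ] at hi
              exact hi (by simpa using h)
            rw [sq]
            exact mul_le_mul_of_nonneg_right this.le (hI0 i)
        _ ≤ ∑ i, α * infl f i :=
            Finset.sum_le_sum_of_subset_of_nonneg (Finset.subset_univ _)
              fun i _ _ => mul_nonneg hαpos.le (hI0 i)
        _ = α * K := by rw [hK, Finset.mul_sum]
    have hg0 : 0 ≤ energy g :=
      fj_E_nonneg _ fun x => Finset.sum_nonneg fun i _ => sq_nonneg _
    have hcα : Real.exp (K / (2 * ε)) * (α * K) = ε := by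
      rw [hα, neg_div, Real.exp_neg]
      field_simp
    have h6 := mul_le_mul_of_nonneg_left hsum (Real.exp_pos (K / (2 * ε))).le
    rw [hcα] at h6
    set v := cubeE (fun x => (w x - g x) ^ 2) with hv
    have h7 : 2 * (1 + K / (2 * ε)) * v ≤ K + 2 * ε := by linarith
    have h8 : K + 2 * ε = 2 * (1 + K / (2 * ε)) * ε := by field_simp; ring
    rw [h8] at h7
    exact le_of_mul_le_mul_left h7 (by positivity)
end

section
/- Let f : {0,1}^n → {0,1} be a monotone (coordinatewise nondecreasing) Boolean function with expectation μ = E f > 0, let 0 ≤ r ≤ n, let g(x) be the average of f over all points agreeing with x in the first r coordinates, and let h = f − g. If E[h²] ≤ μ − 2μ², then Pr[ f(x) = 1 | x_1 = ⋯ = x_r = 1 ] ≥ 2μ. -/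
open Finset

lemma class_card {n : ℕ} (r : ℕ) (hr : r ≤ n) (y : Fin n → Bool) :
    (∑ x : Fin n → Bool, if ∀ k : Fin n, (k : ℕ) < r → y k = x k then (1 : ℝ) else 0)
      = 2 ^ (n - r) := by
  classical
  rw [Finset.sum_boole]
  have h : (Finset.univ.filter fun x : Fin n → Bool => ∀ k : Fin n, (k : ℕ) < r → y k = x k)
      = Fintype.piFinset (fun k : Fin n => if (k : ℕ) < r then {y k} else Finset.univ) := by
    ext x
    simp only [Finset.mem_filter, Finset.mem_univ, true_and, Fintype.mem_piFinset]
    refine forall_congr' fun k => ?_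
    by_cases hk : (k : ℕ) < r <;> simp [hk, eq_comm (a := y k)]
  rw [h, Fintype.card_piFinset]
  have h2 : ∀ k : Fin n, (if (k : ℕ) < r then ({y k} : Finset Bool) else Finset.univ).card
      = if (k : ℕ) < r then 1 else 2 := by
    intro k; split_ifs <;> simp
  simp only [h2]
  rw [Fin.prod_univ_eq_prod_range (fun k => if k < r then 1 else 2) n,
    ← Finset.prod_range_mul_prod_Ico _ hr]
  rw [Finset.prod_congr rfl (g := fun _ => 1)
      (fun k hk => by simp [Finset.mem_range.1 hk]),
    Finset.prod_congr (s₁ := Finset.Ico r n) rfl (g := fun _ => 2)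
      (fun k hk => by simp [(Finset.mem_Ico.1 hk).1])]
  simp

lemma condE_sq {n : ℕ} (F : (Fin n → Bool) → ℝ) (r : ℕ) (hr : r ≤ n) :
    ∑ x, condE F r x ^ 2 = ∑ x, F x * condE F r x := by
  have hinv : ∀ x y : Fin n → Bool, (∀ k : Fin n, (k : ℕ) < r → y k = x k) →
      condE F r x = condE F r y := by
    intro x y h
    unfold condE
    congr 1
    refine Finset.sum_congr rfl fun z _ => ?_
    have : (∀ k : Fin n, (k : ℕ) < r → z k = x k) ↔ (∀ k : Fin n, (k : ℕ) < r → z k = y k) :=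
      forall_congr' fun k => forall_congr' fun hk => by rw [h k hk]
    simp only [this]
  have h1 : ∀ x, condE F r x ^ 2 = ∑ y : Fin n → Bool,
      (F y * condE F r y / 2 ^ (n - r)) *
        (if ∀ k : Fin n, (k : ℕ) < r → y k = x k then (1 : ℝ) else 0) := by
    intro x
    rw [sq]
    nth_rewrite 1 [condE]
    rw [Finset.sum_div, Finset.sum_mul]
    refine Finset.sum_congr rfl fun y _ => ?_
    split_ifs with h
    · rw [hinv x y h]; ring
    · simp
  simp only [h1]
  rw [Finset.sum_comm]
  refine Finset.sum_congr rfl fun y _ => ?_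
  rw [← Finset.mul_sum, class_card r hr y]
  field_simp

lemma condE_le {n : ℕ} (f : (Fin n → Bool) → Bool)
    (hmono : ∀ x y : Fin n → Bool, (∀ k, x k ≤ y k) → f x ≤ f y) (r : ℕ) (x : Fin n → Bool) :
    condE (fun y => if f y then (1 : ℝ) else 0) r x ≤
    (∑ x : Fin n → Bool,
        if (∀ k : Fin n, (k : ℕ) < r → x k = true) ∧ f x = true then (1 : ℝ) else 0) /
      2 ^ (n - r) := by
  unfold condE
  refine div_le_div_of_nonneg_right ?_ (by positivity)
  simp only [← ite_and]
  rw [Finset.sum_boole, Finset.sum_boole]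
  norm_cast
  apply Finset.card_le_card_of_injOn
    (fun y : Fin n → Bool => fun k : Fin n => if (k : ℕ) < r then true else y k)
  · intro y hy
    simp only [Finset.coe_filter, Finset.mem_univ, true_and, Set.mem_ofPred_eq] at hy ⊢
    refine ⟨fun k hk => by simp [hk], ?_⟩
    have := hmono y (fun k : Fin n => if (k : ℕ) < r then true else y k) (fun k => by
      split_ifs
      · exact Bool.le_true _
      · exact le_rfl)
    rw [hy.2] at this
    exact top_le_iff.1 this
  · intro y hy z hz h
    simp only [Finset.coe_filter, Finset.mem_univ, true_and, Set.mem_ofPred_eq] at hy hz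
    funext k
    by_cases hk : (k : ℕ) < r
    · rw [hy.1 k hk, hz.1 k hk]
    · simpa [hk] using congrFun h k

/-- If `f` is a monotone Boolean function with expectation `μ > 0`, `g` is the
conditional expectation of `f` given the first `r` coordinates and `h = f - g`
satisfies `E[h²] ≤ μ - 2μ²`, then `Pr[f(x) = 1 | x_1 = ⋯ = x_r = 1] ≥ 2μ`. -/
theorem restriction_expectation_ge {n : ℕ} (f : (Fin n → Bool) → Bool)
    (hmono : ∀ x y : Fin n → Bool, (∀ k, x k ≤ y k) → f x ≤ f y)
    (hμ : 0 < meanB f) (r : ℕ) (hr : r ≤ n)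
    (hclose : cubeE (fun x => ((if f x then (1 : ℝ) else 0) -
        condE (fun y => if f y then (1 : ℝ) else 0) r x) ^ 2) ≤
      meanB f - 2 * (meanB f) ^ 2) :
    (∑ x : Fin n → Bool,
        if (∀ k : Fin n, (k : ℕ) < r → x k = true) ∧ f x = true then (1 : ℝ) else 0) /
      2 ^ (n - r) ≥ 2 * meanB f := by
  set M := (∑ x : Fin n → Bool,
        if (∀ k : Fin n, (k : ℕ) < r → x k = true) ∧ f x = true then (1 : ℝ) else 0) /
      2 ^ (n - r) with hM
  set F : (Fin n → Bool) → ℝ := fun y => if f y then (1 : ℝ) else 0 with hF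
  have hle : ∀ x, condE F r x ≤ M := condE_le f hmono r
  have hsq := condE_sq F r hr
  have hmean : meanB f = (∑ x, F x) / 2 ^ n := rfl
  have hE : cubeE (fun x => (F x - condE F r x) ^ 2)
      = meanB f - (∑ x, F x * condE F r x) / 2 ^ n := by
    rw [hmean, cubeE, ← sub_div]
    congr 1
    have : ∀ x, (F x - condE F r x) ^ 2
        = F x - 2 * (F x * condE F r x) + condE F r x ^ 2 := by
      intro x
      have : F x ^ 2 = F x := by simp only [hF]; split_ifs <;> simp
      linear_combination this
    simp only [this]
    rw [Finset.sum_add_distrib, Finset.sum_sub_distrib, hsq, ← Finset.mul_sum]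
    ring
  have hub : (∑ x, F x * condE F r x) / 2 ^ n ≤ meanB f * M := by
    rw [hmean, div_mul_eq_mul_div, Finset.sum_mul]
    gcongr with x
    exact hle x
  have hc : cubeE (fun x => (F x - condE F r x) ^ 2) ≤ meanB f - 2 * meanB f ^ 2 := hclose
  rw [hE] at hc
  have : meanB f * (2 * meanB f) ≤ meanB f * M := by nlinarith
  exact le_of_mul_le_mul_left this hμ
end
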